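/- arXiv:2602.23151 — 6 statements merged into one kernel-verified Lean document; each statement's English description precedes it below -/
import Mathlib

section
/- Fix an integer L ≥ 1 and a constant c ≥ 1. Let T_k : (ℝ^d)^k → ℝ be symmetric k-linear forms for 3 ≤ k ≤ 2L+1 with ‖T_k‖_op ≤ c, and set f(x) = ‖x‖²/2 + Σ_{k=3}^{2L+1} T_k[x^{⊗k}]. Then there exist an integer N ≥ 2, symmetric q-linear maps Φ_q : (ℝ^d)^q → ℝ^d for 2 ≤ q ≤ N whose operator norms are bounded by a constant depending only on c and L, and a constant C' depending only on c and L, such that, defining φ(t) = Σ_{q=2}^{N} Φ_q[t^{⊗q}], one has |f(t + φ(t)) − ‖t‖²/2| ≤ C'·‖t‖^{2L+2} for all ‖t‖ ≤ 1. -/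
noncomputable section

/-! Build `φ` degree by degree. If `φ` makes the defect `f(t + φ(t)) - ‖t‖²/2` vanish to order
`n + 1` and `h` is the part of the defect homogeneous of degree `n + 1`, then the Riesz
representation theorem gives `ψ` homogeneous of degree `n` with `⟨t, ψ(t)⟩ = -h(t)`; replacing `φ`
by `φ + ψ` adds `⟨t, ψ(t)⟩` to the defect, up to terms of order `n + 2`.

For the constants not to depend on the dimension, the argument is run on all admissible `f`
simultaneously, as one family of polynomial maps whose homogeneous parts have uniformly bounded
norms. Polarization turns the bounds on the diagonal into such norm bounds. -/

section Polarization

lemma sum_surjective_eq_sum_perm {ι M : Type*} [Fintype ι] [DecidableEq ι] [AddCommMonoid M]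
    (F : (ι → ι) → M) :
    ∑ f, (if f.Surjective then F f else 0) = ∑ σ : Equiv.Perm ι, F σ := by
  rw [← Finset.sum_filter]
  refine (Finset.sum_bij (fun (σ : Equiv.Perm ι) _ => (σ : ι → ι)) ?_ ?_ ?_ fun _ _ => rfl).symm
  · simp [Equiv.surjective]
  · exact fun σ _ τ _ h => DFunLike.coe_injective h
  · intro f hf
    have hf' : f.Bijective := Finite.surjective_iff_bijective.mp (Finset.mem_filter.mp hf).2
    exact ⟨Equiv.ofBijective f hf', Finset.mem_univ _, rfl⟩

lemma sum_neg_one_pow_card_smul_diag_sum_compl {R ι V W : Type*} [Semiring R]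
    [AddCommMonoid V] [Module R V] [AddCommGroup W] [Module R W] [Fintype ι] [DecidableEq ι]
    (A : MultilinearMap R (fun _ : ι => V) W) (m : ι → V) :
    ∑ s : Finset ι, (-1 : ℤ) ^ s.card • A (fun _ => ∑ j ∈ sᶜ, m j) =
      ∑ σ : Equiv.Perm ι, A (m ∘ σ) := by
  have mem_iff (s : Finset ι) (f : ι → ι) :
      f ∈ Fintype.piFinset (fun _ => sᶜ) ↔ s ∈ (Finset.univ.image f)ᶜ.powerset := by
    simp only [Fintype.mem_piFinset, Finset.mem_compl, Finset.mem_powerset, Finset.subset_iff,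
      Finset.mem_image, Finset.mem_univ, true_and, not_exists]
    exact ⟨fun h j hj i hi => h i (hi ▸ hj), fun h i hi => h hi i rfl⟩
  have compl_image_eq_empty (f : ι → ι) : (Finset.univ.image f)ᶜ = ∅ ↔ f.Surjective := by
    simp only [Finset.compl_eq_empty_iff, Finset.eq_univ_iff_forall, Finset.mem_image,
      Finset.mem_univ, true_and, Function.Surjective]
  calc ∑ s : Finset ι, (-1 : ℤ) ^ s.card • A (fun _ => ∑ j ∈ sᶜ, m j)
      = ∑ s : Finset ι, ∑ f ∈ Fintype.piFinset (fun _ => sᶜ), (-1 : ℤ) ^ s.card • A (m ∘ f) := by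
        simp only [MultilinearMap.map_sum_finset, Finset.smul_sum, Function.comp_def]
    _ = ∑ f : ι → ι, ∑ s ∈ (Finset.univ.image f)ᶜ.powerset, (-1 : ℤ) ^ s.card • A (m ∘ f) :=
        Finset.sum_comm' fun s f => by simp only [mem_iff, Finset.mem_univ, true_and, and_true]
    _ = ∑ f : ι → ι, if f.Surjective then A (m ∘ f) else 0 := by
        simp only [← Finset.sum_smul, Finset.sum_powerset_neg_one_pow_card, ite_smul, one_smul,
          zero_smul, compl_image_eq_empty]
    _ = ∑ σ : Equiv.Perm ι, A (m ∘ σ) := sum_surjective_eq_sum_perm _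

end Polarization

section Symmetrization
variable {𝕜 ι V W : Type*} [Field 𝕜] [AddCommGroup V] [Module 𝕜 V] [AddCommGroup W] [Module 𝕜 W]
  [Fintype ι] [DecidableEq ι]

/-- The average of a multilinear map over all permutations of its arguments: a symmetric map with
the same values on the diagonal. -/
def symmetrization (A : MultilinearMap 𝕜 (fun _ : ι => V) W) :
    MultilinearMap 𝕜 (fun _ : ι => V) W :=
  ((Fintype.card ι).factorial : 𝕜)⁻¹ • ∑ σ : Equiv.Perm ι, A.domDomCongr σ

lemma symmetrization_apply (A : MultilinearMap 𝕜 (fun _ : ι => V) W) (m : ι → V) :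
    symmetrization A m =
      ((Fintype.card ι).factorial : 𝕜)⁻¹ • ∑ σ : Equiv.Perm ι, A (m ∘ σ) := by
  simp only [symmetrization, smul_apply, sum_apply,
    MultilinearMap.domDomCongr_apply, Function.comp_def]

lemma symmetrization_apply_comp_perm (A : MultilinearMap 𝕜 (fun _ : ι => V) W)
    (τ : Equiv.Perm ι) (m : ι → V) : symmetrization A (m ∘ τ) = symmetrization A m := by
  simp only [symmetrization_apply]
  congr 1
  exact Equiv.sum_comp (Equiv.mulLeft τ) fun σ : Equiv.Perm ι => A (m ∘ σ)

lemma symmetrization_apply_diag [CharZero 𝕜] (A : MultilinearMap 𝕜 (fun _ : ι => V) W) (v : V) :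
    (symmetrization A fun _ => v) = A fun _ => v := by
  have card_ne_zero : ((Fintype.card ι).factorial : 𝕜) ≠ 0 := mod_cast Nat.factorial_ne_zero _
  simp only [symmetrization_apply, Function.comp_def, Finset.sum_const, Finset.card_univ,
    Fintype.card_perm, ← Nat.cast_smul_eq_nsmul 𝕜, inv_smul_smul₀ card_ne_zero]

end Symmetrization

section DiagonalBounds
variable {ι V W : Type*} [NormedAddCommGroup V] [NormedSpace ℝ V] [NormedAddCommGroup W]
  [NormedSpace ℝ W] [Fintype ι]
open NormedSpace (normalize)

lemma norm_apply_eq_prod_norm_mul_norm_apply_normalize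
    (A : MultilinearMap ℝ (fun _ : ι => V) W) (m : ι → V) :
    ‖A m‖ = (∏ i, ‖m i‖) * ‖A fun i => normalize (m i)‖ := by
  have h := A.map_smul_univ (fun i => ‖m i‖) (fun i => normalize (m i))
  simp only [NormedSpace.norm_smul_normalize] at h
  rw [h, norm_smul, norm_prod]
  simp only [norm_norm]

lemma norm_apply_diag_le [Nonempty ι] {A : MultilinearMap ℝ (fun _ : ι => V) W} {c : ℝ}
    (hA : ∀ u : V, ‖u‖ = 1 → ‖A fun _ => u‖ ≤ c) (v : V) :
    ‖A fun _ => v‖ ≤ c * ‖v‖ ^ Fintype.card ι := by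
  rw [norm_apply_eq_prod_norm_mul_norm_apply_normalize, Finset.prod_const, Finset.card_univ,
    mul_comm]
  rcases eq_or_ne v 0 with rfl | hv
  · simp
  · gcongr
    exact hA _ (NormedSpace.norm_normalize hv)

lemma norm_symmetrization_apply_le_of_norm_eq_one [Nonempty ι] [DecidableEq ι]
    {A : MultilinearMap ℝ (fun _ : ι => V) W} {c : ℝ}
    (hA : ∀ u : V, ‖u‖ = 1 → ‖A fun _ => u‖ ≤ c) {m : ι → V} (hm : ∀ i, ‖m i‖ = 1) :
    ‖symmetrization A m‖ ≤ c * (2 * Fintype.card ι) ^ Fintype.card ι := by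
  have hc : 0 ≤ c := (norm_nonneg _).trans (hA _ (hm (Classical.arbitrary ι)))
  set k := Fintype.card ι
  have norm_sum_le_card (s : Finset ι) : ‖∑ j ∈ s, m j‖ ≤ k :=
    calc ‖∑ j ∈ s, m j‖ ≤ ∑ j ∈ s, ‖m j‖ := norm_sum_le _ _
      _ = s.card := by simp only [hm, Finset.sum_const, nsmul_eq_mul, mul_one]
      _ ≤ k := mod_cast s.card_le_univ
  have norm_term_le (s : Finset ι) :
      ‖(-1 : ℤ) ^ s.card • A (fun _ => ∑ j ∈ sᶜ, m j)‖ ≤ c * k ^ k := by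
    rcases neg_one_pow_eq_or ℤ s.card with h | h <;>
      simp only [h, one_smul, neg_smul, norm_neg] <;>
      exact (norm_apply_diag_le hA _).trans (by gcongr; exact norm_sum_le_card _)
  rw [symmetrization_apply, ← sum_neg_one_pow_card_smul_diag_sum_compl, norm_smul, norm_inv,
    RCLike.norm_natCast]
  calc (k.factorial : ℝ)⁻¹ * ‖∑ s : Finset ι, (-1 : ℤ) ^ s.card • A (fun _ => ∑ j ∈ sᶜ, m j)‖
      ≤ 1 * ∑ _ : Finset ι, c * k ^ k := by
        gcongr
        · exact inv_le_one_of_one_le₀ (mod_cast k.factorial_pos)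
        · exact norm_sum_le_of_le _ fun s _ => norm_term_le s
    _ = c * (2 * k) ^ k := by
        rw [Finset.sum_const, Finset.card_univ, Fintype.card_finset, nsmul_eq_mul, mul_pow]
        push_cast
        ring

lemma norm_symmetrization_apply_le [Nonempty ι] [DecidableEq ι]
    {A : MultilinearMap ℝ (fun _ : ι => V) W} {c : ℝ}
    (hA : ∀ u : V, ‖u‖ = 1 → ‖A fun _ => u‖ ≤ c) (m : ι → V) :
    ‖symmetrization A m‖ ≤ c * (2 * Fintype.card ι) ^ Fintype.card ι * ∏ i, ‖m i‖ := by
  by_cases hm : ∃ i, m i = 0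
  · obtain ⟨i, hi⟩ := hm
    rw [(symmetrization A).map_coord_zero i hi, norm_zero,
      Finset.prod_eq_zero (Finset.mem_univ i) (by rw [hi, norm_zero]), mul_zero]
  · push Not at hm
    rw [norm_apply_eq_prod_norm_mul_norm_apply_normalize, mul_comm]
    gcongr
    exact norm_symmetrization_apply_le_of_norm_eq_one hA
      fun i => NormedSpace.norm_normalize (hm i)

end DiagonalBounds

lemma apply_diag_eq_curryLeft_apply_diag {𝕜 V W : Type*} [NontriviallyNormedField 𝕜]
    [NormedAddCommGroup V] [NormedSpace 𝕜 V] [NormedAddCommGroup W] [NormedSpace 𝕜 W] {k : ℕ}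
    (A : V [×(k + 1)]→L[𝕜] W) (v : V) : (A fun _ => v) = A.curryLeft v fun _ => v := by
  rw [ContinuousMultilinearMap.curryLeft_apply]
  exact congrArg A (Fin.cons_self_tail fun _ => v).symm

section UniformFamilies
variable (𝕜 : Type*) [NontriviallyNormedField 𝕜] {ι : Type*} {E F F' G : ι → Type*}
  [∀ i, NormedAddCommGroup (E i)] [∀ i, NormedSpace 𝕜 (E i)]
  [∀ i, NormedAddCommGroup (F i)] [∀ i, NormedSpace 𝕜 (F i)]
  [∀ i, NormedAddCommGroup (F' i)] [∀ i, NormedSpace 𝕜 (F' i)]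
  [∀ i, NormedAddCommGroup (G i)] [∀ i, NormedSpace 𝕜 (G i)]

/-- A family of maps `g i : E i → F i`, each homogeneous of degree `n` (the restriction to the
diagonal of a continuous `n`-linear map), with a bound on the `n`-linear maps uniform in `i`. The
index `i` ranges over all data for which constants are to be chosen simultaneously. -/
def IsUnifHomogeneous (n : ℕ) (g : ∀ i, E i → F i) : Prop :=
  ∃ C : ℝ, ∀ i, ∃ A : E i [×n]→L[𝕜] F i, ‖A‖ ≤ C ∧ ∀ t, g i t = A fun _ => t

/-- A family of maps that is a finite sum of families `IsUnifHomogeneous` of degrees at least `m`: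
polynomial maps vanishing to order `m` at `0`, uniformly in the index. -/
inductive IsUnifPoly (m : ℕ) : (∀ i, E i → F i) → Prop
  | zero : IsUnifPoly m fun _ _ => 0
  | homogeneous_add {n : ℕ} {h g : ∀ i, E i → F i} (hmn : m ≤ n) (hh : IsUnifHomogeneous 𝕜 n h)
      (hg : IsUnifPoly m g) : IsUnifPoly m fun i t => h i t + g i t

variable {𝕜}

namespace IsUnifHomogeneous
variable {n n' m : ℕ} {g h : ∀ i, E i → F i} {g' : ∀ i, E i → F' i}

lemma isUnifPoly (hg : IsUnifHomogeneous 𝕜 n g) (hmn : m ≤ n) : IsUnifPoly 𝕜 m g := by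
  simpa only [add_zero] using IsUnifPoly.homogeneous_add hmn hg .zero

lemma const {a : ∀ i, F i} {C : ℝ} (ha : ∀ i, ‖a i‖ ≤ C) :
    IsUnifHomogeneous 𝕜 0 fun i (_ : E i) => a i :=
  ⟨C, fun i => ⟨.constOfIsEmpty 𝕜 _ (a i),
    (ContinuousMultilinearMap.norm_constOfIsEmpty 𝕜 _ _).trans_le (ha i), fun _ => rfl⟩⟩

lemma id : IsUnifHomogeneous 𝕜 1 fun i (t : E i) => t :=
  ⟨1, fun i => ⟨.ofSubsingleton 𝕜 (E i) (E i) 0 (.id 𝕜 _),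
    ContinuousMultilinearMap.norm_ofSubsingleton_id_le 𝕜 (E i) 0, fun _ => rfl⟩⟩

lemma zero (n : ℕ) : IsUnifHomogeneous 𝕜 n fun i (_ : E i) => (0 : F i) :=
  ⟨0, fun _ => ⟨0, norm_zero.le, fun _ => rfl⟩⟩

lemma add (hg : IsUnifHomogeneous 𝕜 n g) (hh : IsUnifHomogeneous 𝕜 n h) :
    IsUnifHomogeneous 𝕜 n fun i t => g i t + h i t := by
  obtain ⟨C, hC⟩ := hg
  obtain ⟨C', hC'⟩ := hh
  refine ⟨C + C', fun i => ?_⟩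
  obtain ⟨A, hA, hgA⟩ := hC i
  obtain ⟨B, hB, hhB⟩ := hC' i
  exact ⟨A + B, norm_add_le_of_le hA hB, fun t => by simp only [hgA, hhB, add_apply]⟩

lemma const_smul (c : 𝕜) (hg : IsUnifHomogeneous 𝕜 n g) :
    IsUnifHomogeneous 𝕜 n fun i t => c • g i t := by
  obtain ⟨C, hC⟩ := hg
  refine ⟨‖c‖ * C, fun i => ?_⟩
  obtain ⟨A, hA, hgA⟩ := hC i
  exact ⟨c • A, (norm_smul_le c A).trans (by gcongr), fun t => by simp only [hgA, smul_apply]⟩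

lemma bilin (hg : IsUnifHomogeneous 𝕜 n g) (hg' : IsUnifHomogeneous 𝕜 n' g')
    {B : ∀ i, F i →L[𝕜] F' i →L[𝕜] G i} {b : ℝ} (hB : ∀ i, ‖B i‖ ≤ b) :
    IsUnifHomogeneous 𝕜 (n + n') fun i t => B i (g i t) (g' i t) := by
  obtain ⟨C, hC⟩ := hg
  obtain ⟨C', hC'⟩ := hg'
  refine ⟨b * C * C', fun i => ?_⟩
  obtain ⟨A, hA, hgA⟩ := hC i
  obtain ⟨A', hA', hgA'⟩ := hC' i
  have hb : 0 ≤ b := (norm_nonneg (B i)).trans (hB i)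
  have hC : 0 ≤ C := (norm_nonneg A).trans hA
  have hC' : 0 ≤ C' := (norm_nonneg A').trans hA'
  let composeA' : (F' i →L[𝕜] G i) →L[𝕜] E i [×n']→L[𝕜] G i :=
    (ContinuousLinearMap.compContinuousMultilinearMapL 𝕜 _ (F' i) (G i)).flip A'
  let M : E i [×(n + n')]→L[𝕜] G i :=
    ((composeA' ∘L B i).compContinuousMultilinearMap A).uncurrySum.domDomCongr finSumFinEquiv
  have M_apply (m : Fin (n + n') → E i) :
      M m = B i (A fun j => m (Fin.castAdd n' j)) (A' fun j => m (Fin.natAdd n j)) := rfl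
  refine ⟨M, ContinuousMultilinearMap.opNorm_le_bound (by positivity) fun m => ?_,
    fun t => by simp only [M_apply, hgA, hgA']⟩
  calc ‖M m‖ ≤ ‖B i‖ * ‖A fun j => m (Fin.castAdd n' j)‖ * ‖A' fun j => m (Fin.natAdd n j)‖ :=
        (B i).le_opNorm₂ _ _
    _ ≤ b * (C * ∏ j, ‖m (Fin.castAdd n' j)‖) * (C' * ∏ j, ‖m (Fin.natAdd n j)‖) := by
        gcongr
        · exact hB i
        · exact A.le_of_opNorm_le hA _
        · exact A'.le_of_opNorm_le hA' _
    _ = b * C * C' * ∏ j, ‖m j‖ := by rw [Fin.prod_univ_add]; ring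

lemma comp_clm (hg : IsUnifHomogeneous 𝕜 n g) {B : ∀ i, F i →L[𝕜] G i} {b : ℝ}
    (hB : ∀ i, ‖B i‖ ≤ b) : IsUnifHomogeneous 𝕜 n fun i t => B i (g i t) := by
  simpa only [zero_add, ContinuousLinearMap.id_apply] using
    (const hB).bilin hg (B := fun i => .id 𝕜 _) fun _ => ContinuousLinearMap.norm_id_le

lemma exists_norm_le (hg : IsUnifHomogeneous 𝕜 n g) :
    ∃ C : ℝ, 0 ≤ C ∧ ∀ i t, ‖g i t‖ ≤ C * ‖t‖ ^ n := by
  obtain ⟨C, hC⟩ := hg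
  refine ⟨|C|, abs_nonneg C, fun i t => ?_⟩
  obtain ⟨A, hA, hgA⟩ := hC i
  rw [hgA]
  simpa using A.le_of_opNorm_le (hA.trans (le_abs_self C)) fun _ => t

end IsUnifHomogeneous

namespace IsUnifPoly
variable {m n n' r : ℕ} {g h : ∀ i, E i → F i} {g' : ∀ i, E i → F' i}

lemma mono (hg : IsUnifPoly 𝕜 n g) (hmn : m ≤ n) : IsUnifPoly 𝕜 m g := by
  induction hg with
  | zero => exact .zero
  | homogeneous_add hn hh _ ih => exact .homogeneous_add (hmn.trans hn) hh ih

lemma add (hg : IsUnifPoly 𝕜 m g) (hh : IsUnifPoly 𝕜 m h) :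
    IsUnifPoly 𝕜 m fun i t => g i t + h i t := by
  induction hg with
  | zero => simpa only [zero_add] using hh
  | homogeneous_add hn hhom _ ih => simpa only [add_assoc] using .homogeneous_add hn hhom ih

lemma sum {α : Type*} (s : Finset α) {g : α → ∀ i, E i → F i}
    (hg : ∀ a ∈ s, IsUnifPoly 𝕜 m (g a)) : IsUnifPoly 𝕜 m fun i t => ∑ a ∈ s, g a i t := by
  classical
  induction s using Finset.induction_on with
  | empty => simpa only [Finset.sum_empty] using zero
  | insert a s ha ih =>
    simp only [Finset.sum_insert ha]
    exact (hg a (s.mem_insert_self a)).add (ih fun b hb => hg b (Finset.mem_insert_of_mem hb))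

lemma const_smul (c : 𝕜) (hg : IsUnifPoly 𝕜 m g) : IsUnifPoly 𝕜 m fun i t => c • g i t := by
  induction hg with
  | zero => simpa only [smul_zero] using zero
  | homogeneous_add hn hh _ ih =>
    simpa only [smul_add] using .homogeneous_add hn (hh.const_smul c) ih

lemma bilin (hg : IsUnifPoly 𝕜 n g) (hg' : IsUnifPoly 𝕜 n' g')
    {B : ∀ i, F i →L[𝕜] F' i →L[𝕜] G i} {b : ℝ} (hB : ∀ i, ‖B i‖ ≤ b) :
    IsUnifPoly 𝕜 (n + n') fun i t => B i (g i t) (g' i t) := by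
  induction hg with
  | zero => simpa only [map_zero, zero_apply] using zero
  | @homogeneous_add j h g hj hh hg ih =>
    simp only [map_add, add_apply]
    refine add ?_ ih
    clear ih
    induction hg' with
    | zero => simpa only [map_zero] using zero
    | homogeneous_add hj' hh' _ ih' =>
      simpa only [map_add] using .homogeneous_add (add_le_add hj hj') (hh.bilin hh' hB) ih'

lemma comp_clm (hg : IsUnifPoly 𝕜 n g) {B : ∀ i, F i →L[𝕜] G i} {b : ℝ}
    (hB : ∀ i, ‖B i‖ ≤ b) : IsUnifPoly 𝕜 n fun i t => B i (g i t) := by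
  induction hg with
  | zero => simpa only [map_zero] using zero
  | homogeneous_add hn hh _ ih => simpa only [map_add] using .homogeneous_add hn (hh.comp_clm hB) ih

lemma exists_norm_le (hg : IsUnifPoly 𝕜 m g) :
    ∃ C : ℝ, 0 ≤ C ∧ ∀ i t, ‖t‖ ≤ 1 → ‖g i t‖ ≤ C * ‖t‖ ^ m := by
  induction hg with
  | zero => exact ⟨0, le_rfl, by simp⟩
  | homogeneous_add hn hh _ ih =>
    obtain ⟨C, hC, hhC⟩ := hh.exists_norm_le
    obtain ⟨C', hC', hgC'⟩ := ih
    refine ⟨C + C', add_nonneg hC hC', fun i t ht => ?_⟩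
    rw [add_mul]
    refine norm_add_le_of_le ((hhC i t).trans ?_) (hgC' i t ht)
    exact mul_le_mul_of_nonneg_left (pow_le_pow_of_le_one (norm_nonneg t) ht hn) hC

lemma exists_eq_homogeneous_add (hg : IsUnifPoly 𝕜 m g) :
    ∃ h r : ∀ i, E i → F i, IsUnifHomogeneous 𝕜 m h ∧ IsUnifPoly 𝕜 (m + 1) r ∧
      ∀ i t, g i t = h i t + r i t := by
  induction hg with
  | zero => exact ⟨_, _, .zero m, zero, fun _ _ => (add_zero 0).symm⟩
  | homogeneous_add hn hh _ ih =>
    obtain ⟨h', r', hh', hr', eq_add⟩ := ih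
    rcases hn.eq_or_lt with rfl | hlt
    · exact ⟨_, _, hh.add hh', hr', fun i t => by simp only [eq_add, add_assoc]⟩
    · exact ⟨_, _, hh', .homogeneous_add hlt hh hr',
        fun i t => by simp only [eq_add, add_left_comm]⟩

section Substitution
variable {k : ℕ} {y z : ∀ i, E i → F i}

lemma curryLeft_apply {a : ∀ i, E i → F i [×(k + 1)]→L[𝕜] G i} (ha : IsUnifPoly 𝕜 m a)
    (hy : IsUnifPoly 𝕜 n y) : IsUnifPoly 𝕜 (m + n) fun i t => (a i t).curryLeft (y i t) :=
  ha.bilin hy (B := fun i => (continuousMultilinearCurryLeftEquiv 𝕜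
    (fun _ : Fin (k + 1) => F i) (G i)).toLinearIsometry.toContinuousLinearMap)
    fun _ => LinearIsometry.norm_toContinuousLinearMap_le _

lemma apply_diag {a : ∀ i, E i → F i [×k]→L[𝕜] G i} (ha : IsUnifPoly 𝕜 m a)
    (hy : IsUnifPoly 𝕜 n y) : IsUnifPoly 𝕜 (m + k * n) fun i t => a i t fun _ => y i t := by
  induction k generalizing m with
  | zero =>
    have diag_eq_zero (i t) : (fun _ => y i t : Fin 0 → F i) = 0 := Subsingleton.elim _ _
    simp only [diag_eq_zero, zero_mul, add_zero]
    exact ha.comp_clm (B := fun i =>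
      (continuousMultilinearCurryFin0 𝕜 (F i) (G i)).toLinearIsometry.toContinuousLinearMap)
      fun _ => LinearIsometry.norm_toContinuousLinearMap_le _
  | succ k ih =>
    simp only [apply_diag_eq_curryLeft_apply_diag]
    exact (ih (ha.curryLeft_apply hy)).mono (by rw [add_mul]; omega)

-- The degree condition reads `n ≤ m + (k - 1) + r` when `0 < k`: in each term of the telescoped
-- difference one of the `k` arguments is `z` and the others have order at least `1`.
lemma apply_diag_add_sub {a : ∀ i, E i → F i [×k]→L[𝕜] G i} (ha : IsUnifPoly 𝕜 m a)
    (hy : IsUnifPoly 𝕜 1 y) (hr : 1 ≤ r) (hz : IsUnifPoly 𝕜 r z) (hn : n + 1 ≤ m + k + r) :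
    IsUnifPoly 𝕜 n fun i t => a i t (fun _ => y i t + z i t) - a i t fun _ => y i t := by
  induction k generalizing m with
  | zero =>
    have diff_eq_zero (i t) :
        a i t (fun _ => y i t + z i t) - a i t (fun _ => y i t) = 0 :=
      sub_eq_zero.mpr <| congrArg (a i t) <| Subsingleton.elim _ _
    simpa only [diff_eq_zero] using zero
  | succ k ih =>
    have telescope (i t) : a i t (fun _ => y i t + z i t) - a i t (fun _ => y i t) =
        ((a i t).curryLeft (y i t + z i t) (fun _ => y i t + z i t) -
          (a i t).curryLeft (y i t + z i t) fun _ => y i t) +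
        (a i t).curryLeft (z i t) fun _ => y i t := by
      rw [apply_diag_eq_curryLeft_apply_diag,
        apply_diag_eq_curryLeft_apply_diag (a i t) (y i t), map_add, add_apply, add_apply]
      abel
    simp only [telescope]
    exact (ih (ha.curryLeft_apply (hy.add (hz.mono hr))) (by omega)).add
      (((ha.curryLeft_apply hz).apply_diag hy).mono (by omega))

lemma comp_add_sub_comp {p : ∀ i, F i → G i} (hp : IsUnifPoly 𝕜 (m + 1) p)
    (hy : IsUnifPoly 𝕜 1 y) (hr : 1 ≤ r) (hz : IsUnifPoly 𝕜 r z) :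
    IsUnifPoly 𝕜 (m + r) fun i t => p i (y i t + z i t) - p i (y i t) := by
  induction hp with
  | zero => simpa only [sub_self] using zero
  | homogeneous_add hn hh _ ih =>
    simp only [add_sub_add_comm]
    refine add ?_ ih
    obtain ⟨C, hC⟩ := hh
    choose A hA hhA using hC
    simp only [hhA]
    exact ((IsUnifHomogeneous.const hA).isUnifPoly le_rfl).apply_diag_add_sub hy hr hz (by omega)

end Substitution
end IsUnifPoly

end UniformFamilies

section SymmetricRepresentation
variable {ι : Type*} {E F : ι → Type*} [∀ i, NormedAddCommGroup (E i)] [∀ i, NormedSpace ℝ (E i)]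
  [∀ i, NormedAddCommGroup (F i)] [∀ i, NormedSpace ℝ (F i)] {n : ℕ}

lemma isUnifHomogeneous_of_norm_diag_le [NeZero n]
    {A : ∀ i, MultilinearMap ℝ (fun _ : Fin n => E i) (F i)} {c : ℝ}
    (hA : ∀ i u, ‖u‖ = 1 → ‖A i fun _ => u‖ ≤ c) :
    IsUnifHomogeneous ℝ n fun i t => A i fun _ => t :=
  ⟨_, fun i => ⟨(symmetrization (A i)).mkContinuous _ (norm_symmetrization_apply_le (hA i)),
    MultilinearMap.mkContinuous_norm_le' _ _, fun t => (symmetrization_apply_diag (A i) t).symm⟩⟩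

lemma IsUnifHomogeneous.exists_symmetric {g : ∀ i, E i → F i} (hg : IsUnifHomogeneous ℝ n g) :
    ∃ C : ℝ, 0 ≤ C ∧ ∀ i, ∃ A : MultilinearMap ℝ (fun _ : Fin n => E i) (F i),
      (∀ (σ : Equiv.Perm (Fin n)) m, A (m ∘ σ) = A m) ∧
      (∀ u, ‖u‖ = 1 → ‖A fun _ => u‖ ≤ C) ∧ ∀ t, (A fun _ => t) = g i t := by
  obtain ⟨C, hC, norm_g_le⟩ := hg.exists_norm_le
  obtain ⟨_, exists_multilinear⟩ := hg
  refine ⟨C, hC, fun i => ?_⟩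
  obtain ⟨A, -, hgA⟩ := exists_multilinear i
  have diag_eq (t : E i) : (symmetrization A.toMultilinearMap fun _ => t) = g i t := by
    rw [symmetrization_apply_diag, hgA]
    rfl
  refine ⟨_, symmetrization_apply_comp_perm A.toMultilinearMap, fun u hu => ?_, diag_eq⟩
  simpa only [diag_eq, hu, one_pow, mul_one] using norm_g_le i u

end SymmetricRepresentation

section Riesz
variable {V : Type*} [NormedAddCommGroup V] [InnerProductSpace ℝ V] [CompleteSpace V]

variable (V) in
/-- The vector representing a continuous linear functional on a real Hilbert space. Unlike
`(InnerProductSpace.toDual ℝ V).symm`, which is semilinear over complex conjugation, this is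
`ℝ`-linear as a bundled map. -/
def rieszRepresentative : StrongDual ℝ V →ₗᵢ[ℝ] V where
  toFun := (InnerProductSpace.toDual ℝ V).symm
  map_add' := map_add _
  map_smul' := map_smulₛₗ _
  norm_map' := (InnerProductSpace.toDual ℝ V).symm.norm_map

lemma inner_rieszRepresentative (l : StrongDual ℝ V) (v : V) :
    inner ℝ v (rieszRepresentative V l) = l v := by
  rw [real_inner_comm]
  exact InnerProductSpace.toDual_symm_apply

end Riesz

section PerturbedQuadratic
variable {ι : Type*} {E : ι → Type*} [∀ i, NormedAddCommGroup (E i)]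
  [∀ i, InnerProductSpace ℝ (E i)]

lemma IsUnifHomogeneous.exists_inner_eq [∀ i, CompleteSpace (E i)] {n : ℕ} {g : ∀ i, E i → ℝ}
    (hg : IsUnifHomogeneous ℝ (n + 1) g) :
    ∃ ψ : ∀ i, E i → E i, IsUnifHomogeneous ℝ n ψ ∧ ∀ i t, inner ℝ t (ψ i t) = g i t := by
  obtain ⟨C, hC⟩ := hg
  choose A hA hgA using hC
  have hcurry : IsUnifHomogeneous ℝ n fun i (t : E i) => (A i).curryRight fun _ => t :=
    ⟨C, fun i => ⟨(A i).curryRight, (A i).curryRight_norm.trans_le (hA i), fun _ => rfl⟩⟩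
  refine ⟨_, hcurry.comp_clm (B := fun i => (rieszRepresentative (E i)).toContinuousLinearMap)
    fun i => LinearIsometry.norm_toContinuousLinearMap_le _, fun i t => ?_⟩
  calc inner ℝ t (rieszRepresentative (E i) ((A i).curryRight fun _ => t))
      = A i (Fin.snoc (fun _ => t) t) := inner_rieszRepresentative _ _
    _ = g i t := by rw [hgA]; exact congrArg (A i) (Fin.snoc_init_self fun _ => t)

lemma isUnifPoly_inner {D : ι → Type*} [∀ i, NormedAddCommGroup (D i)] [∀ i, NormedSpace ℝ (D i)]
    {m n : ℕ} {g h : ∀ i, D i → E i} (hg : IsUnifPoly ℝ m g) (hh : IsUnifPoly ℝ n h) :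
    IsUnifPoly ℝ (m + n) fun i t => inner ℝ (g i t) (h i t) :=
  hg.bilin hh (B := fun _ => innerSL ℝ) fun _ => norm_innerSL_le ℝ

/-- The function `f(x) = ‖x‖²/2 + p(x)` to be brought to the form `‖t‖²/2` by a change of
variables `x = t + φ(t)`. -/
def perturbedQuadratic {V : Type*} [NormedAddCommGroup V] (p : V → ℝ) (x : V) : ℝ :=
  ‖x‖ ^ 2 / 2 + p x

lemma IsUnifPoly.perturbedQuadratic_add_sub_sub_inner {p : ∀ i, E i → ℝ} (hp : IsUnifPoly ℝ 3 p)
    {φ ψ : ∀ i, E i → E i} (hφ : IsUnifPoly ℝ 2 φ) {r : ℕ} (hr : 2 ≤ r) (hψ : IsUnifPoly ℝ r ψ) :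
    IsUnifPoly ℝ (r + 2) fun i t => perturbedQuadratic (p i) (t + φ i t + ψ i t) -
      perturbedQuadratic (p i) (t + φ i t) - inner ℝ t (ψ i t) := by
  have expand (i t) : perturbedQuadratic (p i) (t + φ i t + ψ i t) -
      perturbedQuadratic (p i) (t + φ i t) - inner ℝ t (ψ i t) =
      inner ℝ (φ i t + (1 / 2 : ℝ) • ψ i t) (ψ i t) +
        (p i (t + φ i t + ψ i t) - p i (t + φ i t)) := by
    simp only [perturbedQuadratic, norm_add_sq_real (t + φ i t), inner_add_left,
      real_inner_smul_left, real_inner_self_eq_norm_sq]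
    ring
  simp only [expand]
  have hx : IsUnifPoly ℝ 1 fun i t => t + φ i t :=
    (IsUnifHomogeneous.id.isUnifPoly le_rfl).add (hφ.mono one_le_two)
  have hinner := isUnifPoly_inner (hφ.add ((hψ.const_smul (1 / 2)).mono hr)) hψ
  exact (hinner.mono (by omega)).add ((hp.comp_add_sub_comp hx (by omega) hψ).mono (by omega))

theorem IsUnifPoly.exists_perturbedQuadratic_comp_sub [∀ i, CompleteSpace (E i)]
    {p : ∀ i, E i → ℝ} (hp : IsUnifPoly ℝ 3 p) {N : ℕ} (hN : 1 ≤ N) :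
    ∃ Φ : ℕ → ∀ i, E i → E i, (∀ q, IsUnifHomogeneous ℝ q (Φ q)) ∧
      IsUnifPoly ℝ (N + 2) fun i t =>
        perturbedQuadratic (p i) (t + ∑ q ∈ Finset.Icc 2 N, Φ q i t) - ‖t‖ ^ 2 / 2 := by
  induction N, hN using Nat.le_induction with
  | base =>
    exact ⟨fun _ _ _ => 0, .zero, by simpa [perturbedQuadratic] using hp⟩
  | succ N hN ih =>
    obtain ⟨Φ, hΦ, hdefect⟩ := ih
    obtain ⟨h, r, hh, hr, defect_eq⟩ := hdefect.exists_eq_homogeneous_add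
    obtain ⟨ψ, hψ, inner_ψ⟩ := (hh.const_smul (-1)).exists_inner_eq
    have hφ : IsUnifPoly ℝ 2 fun i t => ∑ q ∈ Finset.Icc 2 N, Φ q i t :=
      .sum _ fun q hq => (hΦ q).isUnifPoly (Finset.mem_Icc.mp hq).1
    have sum_update (i t) : ∑ q ∈ Finset.Icc 2 (N + 1), Function.update Φ (N + 1) ψ q i t =
        ∑ q ∈ Finset.Icc 2 N, Φ q i t + ψ i t := by
      rw [Finset.sum_Icc_succ_top (by omega), Function.update_self]
      refine congrArg (· + _) (Finset.sum_congr rfl fun q hq => ?_)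
      rw [Function.update_of_ne (Nat.lt_succ_of_le (Finset.mem_Icc.mp hq).2).ne]
    refine ⟨Function.update Φ (N + 1) ψ,
      (Function.forall_update_iff _ _).mpr ⟨hψ, fun q _ => hΦ q⟩, ?_⟩
    convert! (hp.perturbedQuadratic_add_sub_sub_inner hφ (by omega) (hψ.isUnifPoly le_rfl)).add hr
      using 3 with i t
    rw [sum_update, inner_ψ, ← add_assoc, smul_eq_mul]
    linear_combination defect_eq i t

end PerturbedQuadratic

/-- The admissible perturbations, on all real Hilbert spaces at once: forms of each degree, of
which those of degrees `3, …, K` are bounded by `c` on the diagonal of the unit sphere. It serves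
as the index type of a single uniform family. -/
structure DiagBoundedForms.{u} (K : ℕ) (c : ℝ) : Type (u + 1) where
  Space : Type u
  [normedAddCommGroup : NormedAddCommGroup Space]
  [innerProductSpace : InnerProductSpace ℝ Space]
  [completeSpace : CompleteSpace Space]
  form : (k : ℕ) → MultilinearMap ℝ (fun _ : Fin k => Space) ℝ
  abs_form_diag_le : ∀ k, 3 ≤ k → k ≤ K → ∀ u : Space, ‖u‖ = 1 → |form k fun _ => u| ≤ c

namespace DiagBoundedForms

attribute [instance] normedAddCommGroup innerProductSpace completeSpace

lemma isUnifPoly_sum_form (K : ℕ) (c : ℝ) :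
    IsUnifPoly ℝ 3 fun (i : DiagBoundedForms K c) (x : i.Space) =>
      ∑ k ∈ Finset.Icc 3 K, i.form k fun _ => x := by
  refine .sum _ fun k hk => ?_
  obtain ⟨h3k, hkK⟩ := Finset.mem_Icc.mp hk
  have : NeZero k := ⟨by omega⟩
  exact (isUnifHomogeneous_of_norm_diag_le fun i => i.abs_form_diag_le k h3k hkK).isUnifPoly h3k

end DiagBoundedForms

theorem quadratizing_change_of_variables_general.{u} (K : ℕ) {N : ℕ} (hN : 1 ≤ N) (c : ℝ) :
    ∃ Cnorm C' : ℝ, 0 ≤ Cnorm ∧ 0 ≤ C' ∧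
      ∀ (E : Type u) [NormedAddCommGroup E] [InnerProductSpace ℝ E] [CompleteSpace E]
        (T : (k : ℕ) → MultilinearMap ℝ (fun _ : Fin k => E) ℝ),
        (∀ k, 3 ≤ k → k ≤ K → ∀ u : E, ‖u‖ = 1 → |T k fun _ => u| ≤ c) →
        ∃ Φ : (q : ℕ) → MultilinearMap ℝ (fun _ : Fin q => E) E,
          (∀ q, 2 ≤ q → q ≤ N → ∀ (σ : Equiv.Perm (Fin q)) (m : Fin q → E),
            Φ q (m ∘ σ) = Φ q m) ∧
          (∀ q, 2 ≤ q → q ≤ N → ∀ u : E, ‖u‖ = 1 → ‖Φ q fun _ => u‖ ≤ Cnorm) ∧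
          ∀ t : E, ‖t‖ ≤ 1 →
            |(‖t + ∑ q ∈ Finset.Icc 2 N, Φ q fun _ => t‖ ^ 2 / 2 +
                ∑ k ∈ Finset.Icc 3 K, T k fun _ => t + ∑ q ∈ Finset.Icc 2 N, Φ q fun _ => t) -
              ‖t‖ ^ 2 / 2| ≤ C' * ‖t‖ ^ (N + 2) := by
  obtain ⟨φ, hφ, hdefect⟩ :=
    (DiagBoundedForms.isUnifPoly_sum_form.{u} K c).exists_perturbedQuadratic_comp_sub hN
  obtain ⟨C', hC', defect_le⟩ := hdefect.exists_norm_le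
  choose C hC Φ Φ_symm norm_Φ_le Φ_diag using fun q => (hφ q).exists_symmetric
  refine ⟨∑ q ∈ Finset.Icc 2 N, C q, C', Finset.sum_nonneg fun q _ => hC q, hC',
    fun E _ _ _ T hT => ?_⟩
  let i : DiagBoundedForms K c := ⟨E, T, hT⟩
  refine ⟨fun q => Φ q i, fun q _ _ => Φ_symm q i, fun q h2q hqN u hu => ?_, fun t ht => ?_⟩
  · exact (norm_Φ_le q i u hu).trans
      (Finset.single_le_sum (fun q _ => hC q) (Finset.mem_Icc.mpr ⟨h2q, hqN⟩))
  · simpa only [Φ_diag, perturbedQuadratic, Real.norm_eq_abs] using defect_le i t ht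

/-- **Quadratizing change of variables.** Given symmetric `k`-linear forms `T_k`
(`3 ≤ k ≤ 2L+1`) with operator norms at most `c`, and
`f(x) = ‖x‖²/2 + Σ_{k=3}^{2L+1} T_k[x^{⊗k}]`, there is a polynomial map
`φ(t) = Σ_{q=2}^{N} Φ_q[t^{⊗q}]` built from symmetric `q`-linear maps with operator norms
bounded by a constant depending only on `c` and `L` (not on `d`), such that
`|f(t + φ(t)) − ‖t‖²/2| ≤ C'‖t‖^{2L+2}` for all `‖t‖ ≤ 1`. -/
theorem quadratizing_change_of_variables (L : ℕ) (hL : 1 ≤ L) (c : ℝ) (hc : 1 ≤ c) :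
    ∃ (N : ℕ) (Cnorm C' : ℝ), 2 ≤ N ∧ 0 ≤ Cnorm ∧ 0 ≤ C' ∧
      ∀ (d : ℕ)
        (T : (k : ℕ) → MultilinearMap ℝ (fun _ : Fin k => EuclideanSpace ℝ (Fin d)) ℝ),
        (∀ k, 3 ≤ k → k ≤ 2 * L + 1 →
          ∀ (σ : Equiv.Perm (Fin k)) (m : Fin k → EuclideanSpace ℝ (Fin d)),
            T k (m ∘ σ) = T k m) →
        (∀ k, 3 ≤ k → k ≤ 2 * L + 1 → ∀ u : EuclideanSpace ℝ (Fin d), ‖u‖ = 1 →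
          |T k fun _ => u| ≤ c) →
        ∃ Φ : (q : ℕ) →
            MultilinearMap ℝ (fun _ : Fin q => EuclideanSpace ℝ (Fin d))
              (EuclideanSpace ℝ (Fin d)),
          (∀ q, 2 ≤ q → q ≤ N →
            ∀ (σ : Equiv.Perm (Fin q)) (m : Fin q → EuclideanSpace ℝ (Fin d)),
              Φ q (m ∘ σ) = Φ q m) ∧
          (∀ q, 2 ≤ q → q ≤ N → ∀ u : EuclideanSpace ℝ (Fin d), ‖u‖ = 1 →
            ‖Φ q fun _ => u‖ ≤ Cnorm) ∧
          ∀ t : EuclideanSpace ℝ (Fin d), ‖t‖ ≤ 1 →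
            |(‖t + ∑ q ∈ Finset.Icc 2 N, Φ q fun _ => t‖ ^ 2 / 2 +
                ∑ k ∈ Finset.Icc 3 (2 * L + 1),
                  T k fun _ => t + ∑ q ∈ Finset.Icc 2 N, Φ q fun _ => t) -
              ‖t‖ ^ 2 / 2| ≤ C' * ‖t‖ ^ (2 * L + 2) := by
  obtain ⟨Cnorm, C', hCnorm, hC', exists_change⟩ :=
    quadratizing_change_of_variables_general (2 * L + 1) (N := 2 * L) (by omega) c
  exact ⟨2 * L, Cnorm, C', by omega, hCnorm, hC', fun d T _ hT => exists_change _ T hT⟩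
end
end

section
/- Let d ≥ 1 and N ≥ 2 be integers and let B be a real d×d matrix with operator norm ‖B‖ ≤ 1/2. Then det(I_d + B) > 0 and |log det(I_d + B) − Σ_{k=1}^{N−1} ((−1)^{k+1}/k)·tr(B^k)| ≤ 2·d·‖B‖^{N}. -/
open MeasureTheory Real

noncomputable section

/-!
Over `ℂ` the trace of `A ^ k` and the determinant of `1 + A` are `∑ zᵢ ^ k` and `∏ (1 + zᵢ)`, where
the `zᵢ` are the eigenvalues of `A` counted with multiplicity. Hence the error of the truncated
expansion of `log |det (1 + A)|` is the sum over the eigenvalues of the real parts of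
`log (1 + zᵢ) - ∑ (-1) ^ (k + 1) / k * zᵢ ^ k`, each of which is bounded by the Taylor remainder of
the complex logarithm. The complex eigenvalues of a real matrix `B` are bounded by its operator
norm, because the operator norm does not grow under complexification. If the bound is less than `1`,
the characteristic polynomial of `-B` has no real root in `[1, ∞)`, so its value `det (1 + B)` at
`1` is positive.
-/

open Matrix Polynomial

variable {n : Type*} [Fintype n] [DecidableEq n]

section Charpoly

variable {R K : Type*}

theorem card_roots_charpoly_of_splits [CommRing R] [IsDomain R] {A : Matrix n n R}
    (hA : A.charpoly.Splits) : A.charpoly.roots.card = Fintype.card n := by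
  rw [← hA.natDegree_eq_card_roots, charpoly_natDegree_eq_dim]

theorem det_aeval_eq_prod_roots_charpoly [CommRing R] [IsDomain R] {A : Matrix n n R}
    (hA : A.charpoly.Splits) {p : R[X]} (hp : p.Splits) :
    (aeval A p).det = (A.charpoly.roots.map p.eval).prod := by
  have hcard := card_roots_charpoly_of_splits hA
  induction hp using Submonoid.closure_induction with
  | mem p hp =>
    obtain ⟨a, rfl⟩ | ⟨a, rfl⟩ := hp
    · simp [hcard, Matrix.algebraMap_eq_diagonal]
    · have hdet : (aeval A (X + C a)).det = (-1) ^ Fintype.card n * A.charpoly.eval (-a) := by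
        rw [eval_charpoly, ← det_neg, neg_sub, map_neg, sub_neg_eq_add]
        simp [Matrix.algebraMap_eq_diagonal, Pi.algebraMap_def]
      rw [hdet, hA.eval_eq_prod_roots_of_monic A.charpoly_monic, ← hcard, ← Multiset.card_map,
        ← Multiset.prod_map_neg]
      simp [add_comm]
  | one => simp
  | mul p q _ _ hp hq => simp [hp, hq, Multiset.prod_map_mul]

variable [Field K]

theorem algebraMap_mem_spectrum_map {L : Type*} [Field L] [Algebra K L]
    {A : Matrix n n K} {x : K} (hx : x ∈ spectrum K A) :
    algebraMap K L x ∈ spectrum L (A.map (algebraMap K L)) := by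
  rw [mem_spectrum_iff_isRoot_charpoly] at hx ⊢
  rw [charpoly_map]
  exact hx.map

variable [IsAlgClosed K]

theorem roots_charpoly_aeval (A : Matrix n n K) (p : K[X]) :
    (aeval A p).charpoly.roots = A.charpoly.roots.map p.eval := by
  have hcharpoly : (aeval A p).charpoly =
      ((A.charpoly.roots.map p.eval).map (X - C ·)).prod := by
    refine Polynomial.funext fun x ↦ ?_
    have hdet := det_aeval_eq_prod_roots_charpoly (IsAlgClosed.splits A.charpoly)
      (IsAlgClosed.splits (C x - p))
    simpa [eval_charpoly, eval_multiset_prod, Matrix.algebraMap_eq_diagonal,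
      Pi.algebraMap_def] using hdet
  rw [hcharpoly, roots_multiset_prod_X_sub_C]

theorem trace_pow_eq_sum_roots_charpoly (A : Matrix n n K) (k : ℕ) :
    (A ^ k).trace = (A.charpoly.roots.map (· ^ k)).sum := by
  simpa [trace_eq_sum_roots_charpoly] using congrArg Multiset.sum (roots_charpoly_aeval A (X ^ k))

theorem det_one_add_eq_prod_roots_charpoly (A : Matrix n n K) :
    (1 + A).det = (A.charpoly.roots.map (1 + ·)).prod := by
  have h := det_aeval_eq_prod_roots_charpoly (IsAlgClosed.splits A.charpoly)
    (IsAlgClosed.splits (1 + X))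
  simpa only [map_add, map_one, aeval_X, eval_add, eval_one, eval_X] using h

end Charpoly

section LogDet

theorem log_norm_det_one_add {A : Matrix n n ℂ} (hA : -1 ∉ spectrum ℂ A) :
    log ‖(1 + A).det‖ = (A.charpoly.roots.map fun z ↦ Complex.log (1 + z)).sum.re := by
  have hne : ∀ z ∈ A.charpoly.roots, 1 + z ≠ 0 := by
    intro z hz hz0
    rw [← eq_neg_of_add_eq_zero_right hz0] at hA
    exact hA (mem_spectrum_of_isRoot_charpoly (isRoot_of_mem_roots hz))
  rw [det_one_add_eq_prod_roots_charpoly, ← normHom_apply, map_multiset_prod, log_multiset_prod,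
    ← Complex.coe_reAddGroupHom, map_multiset_sum]
  · simp [Complex.log_re]
  · simpa only [Multiset.forall_mem_map_iff, normHom_apply, norm_ne_zero_iff] using hne

theorem sum_logTaylor_roots_charpoly (A : Matrix n n ℂ) (N : ℕ) :
    (A.charpoly.roots.map (Complex.logTaylor N)).sum =
      ∑ k ∈ Finset.range N, (-1) ^ (k + 1) / k * (A ^ k).trace := by
  unfold Complex.logTaylor
  simp only [Multiset.sum_map_sum, trace_pow_eq_sum_roots_charpoly, ← Multiset.sum_map_mul_left]
  simp only [mul_div_right_comm]

theorem norm_log_sub_logTaylor_le_of_norm_le {N : ℕ} (hN : N ≠ 0) {r : ℝ} (hr : r < 1) {z : ℂ}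
    (hz : ‖z‖ ≤ r) :
    ‖Complex.log (1 + z) - Complex.logTaylor N z‖ ≤ r ^ N / (N * (1 - r)) := by
  obtain ⟨m, rfl⟩ := Nat.exists_eq_succ_of_ne_zero hN
  calc ‖Complex.log (1 + z) - Complex.logTaylor (m + 1) z‖
      ≤ ‖z‖ ^ (m + 1) * (1 - ‖z‖)⁻¹ / (m + 1) :=
        Complex.norm_log_sub_logTaylor_le m (hz.trans_lt hr)
    _ = ‖z‖ ^ (m + 1) / ((m + 1 : ℕ) * (1 - ‖z‖)) := by
        rw [← div_eq_mul_inv, div_div, mul_comm, Nat.cast_succ]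
    _ ≤ r ^ (m + 1) / ((m + 1 : ℕ) * (1 - r)) := by
        have : 0 < 1 - r := sub_pos.2 hr
        have : 0 ≤ r := (norm_nonneg z).trans hz
        gcongr

theorem abs_log_norm_det_one_add_sub_le {A : Matrix n n ℂ} {r : ℝ} (hr : r < 1)
    (hA : ∀ z ∈ spectrum ℂ A, ‖z‖ ≤ r) {N : ℕ} (hN : N ≠ 0) :
    |log ‖(1 + A).det‖ - (∑ k ∈ Finset.range N, (-1) ^ (k + 1) / k * (A ^ k).trace).re| ≤
      Fintype.card n * (r ^ N / (N * (1 - r))) := by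
  have hneg : -1 ∉ spectrum ℂ A := fun h ↦ by simpa using (hA _ h).trans_lt hr
  have hterm : ∀ z ∈ A.charpoly.roots,
      ‖Complex.log (1 + z) - Complex.logTaylor N z‖ ≤ r ^ N / (N * (1 - r)) := fun z hz ↦
    norm_log_sub_logTaylor_le_of_norm_le hN hr
      (hA z (mem_spectrum_of_isRoot_charpoly (isRoot_of_mem_roots hz)))
  rw [log_norm_det_one_add hneg, ← sum_logTaylor_roots_charpoly, ← Complex.sub_re,
    ← Multiset.sum_map_sub]
  refine (Complex.abs_re_le_norm _).trans <| (norm_multiset_sum_le _).trans <|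
    (Multiset.sum_le_card_nsmul _ (r ^ N / (N * (1 - r))) ?_).trans_eq ?_
  · simpa only [Multiset.forall_mem_map_iff] using hterm
  · simp [card_roots_charpoly_of_splits (IsAlgClosed.splits A.charpoly)]

end LogDet

theorem sum_Icc_one_pred_eq_sum_range {M : Type*} [AddCommMonoid M] {f : ℕ → M} (hf : f 0 = 0)
    (N : ℕ) : ∑ k ∈ Finset.Icc 1 (N - 1), f k = ∑ k ∈ Finset.range N, f k := by
  refine Finset.sum_subset (fun k hk ↦ by grind) fun k hk hk' ↦ ?_
  obtain rfl : k = 0 := by grind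
  exact hf

section RealMatrix

theorem det_one_add_pos {B : Matrix n n ℝ} (hB : ∀ x ∈ spectrum ℝ B, -1 < x) :
    0 < (1 + B).det := by
  have hroots : ∀ y, (-B).charpoly.IsRoot y → y < 1 := by
    intro y hy
    have hmem : -y ∈ spectrum ℝ B := by
      simpa [← spectrum.neg_eq] using mem_spectrum_of_isRoot_charpoly hy
    linarith [hB _ hmem]
  simpa [eval_charpoly] using zero_lt_eval_of_roots_lt_of_leadingCoeff_nonneg hroots
    ((-B).charpoly_monic.leadingCoeff ▸ zero_le_one)

theorem logdet_expansion_general {B : Matrix n n ℝ} {r : ℝ} (hr : r < 1)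
    (hB : ∀ z ∈ spectrum ℂ (B.map (algebraMap ℝ ℂ)), ‖z‖ ≤ r) {N : ℕ} (hN : N ≠ 0) :
    0 < (1 + B).det ∧
      |log (1 + B).det - ∑ k ∈ Finset.Icc 1 (N - 1), (-1 : ℝ) ^ (k + 1) / k * (B ^ k).trace| ≤
        Fintype.card n * (r ^ N / (N * (1 - r))) := by
  have hpos : 0 < (1 + B).det := det_one_add_pos fun x hx ↦ by
    have hxr : |x| ≤ r := by simpa using hB _ (algebraMap_mem_spectrum_map hx)
    linarith [neg_abs_le x]
  have hdet : ‖(1 + B.map (algebraMap ℝ ℂ)).det‖ = (1 + B).det := by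
    have hmap := (algebraMap ℝ ℂ).map_det (1 + B)
    rw [map_add, map_one, RingHom.mapMatrix_apply] at hmap
    rw [← hmap, norm_algebraMap', norm_of_nonneg hpos.le]
  have htrace (k : ℕ) : (B.map (algebraMap ℝ ℂ) ^ k).trace = ((B ^ k).trace : ℂ) := by
    rw [← Matrix.map_pow]
    exact (AddMonoidHom.map_trace (algebraMap ℝ ℂ) (B ^ k)).symm
  have hsum : (∑ k ∈ Finset.range N,
        (-1) ^ (k + 1) / k * (B.map (algebraMap ℝ ℂ) ^ k).trace).re =
      ∑ k ∈ Finset.Icc 1 (N - 1), (-1 : ℝ) ^ (k + 1) / k * (B ^ k).trace := by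
    -- The extra term `k = 0` vanishes because `x / 0 = 0`.
    rw [sum_Icc_one_pred_eq_sum_range (by simp)]
    simp only [htrace]
    exact_mod_cast Complex.ofReal_re _
  refine ⟨hpos, ?_⟩
  rw [← hdet, ← hsum]
  exact abs_log_norm_det_one_add_sub_le hr hB hN

end RealMatrix

section OperatorNorm

open scoped Matrix.Norms.L2Operator

variable {𝕜 m : Type*} [RCLike 𝕜] [Fintype m]

theorem norm_sq_eq_norm_re_sq_add_norm_im_sq (w : EuclideanSpace 𝕜 m) :
    ‖w‖ ^ 2 = ‖WithLp.toLp 2 fun i ↦ RCLike.re (w i)‖ ^ 2 +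
      ‖WithLp.toLp 2 fun i ↦ RCLike.im (w i)‖ ^ 2 := by
  simp only [EuclideanSpace.norm_sq_eq, ← Finset.sum_add_distrib, RCLike.norm_sq_eq_def,
    norm_eq_abs, sq_abs, ← sq]

theorem l2_opNorm_map_algebraMap_le (B : Matrix m n ℝ) :
    ‖B.map (algebraMap ℝ 𝕜)‖ ≤ ‖B‖ := by
  refine ContinuousLinearMap.opNorm_le_bound _ (norm_nonneg B) fun w ↦ ?_
  have hre : (fun i ↦ RCLike.re ((B.map (algebraMap ℝ 𝕜) *ᵥ w) i)) =
      B *ᵥ fun j ↦ RCLike.re (w j) := by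
    ext i; simp [mulVec, dotProduct]
  have him : (fun i ↦ RCLike.im ((B.map (algebraMap ℝ 𝕜) *ᵥ w) i)) =
      B *ᵥ fun j ↦ RCLike.im (w j) := by
    ext i; simp [mulVec, dotProduct]
  refine le_of_sq_le_sq ?_ (by positivity)
  calc ‖WithLp.toLp 2 (B.map (algebraMap ℝ 𝕜) *ᵥ w)‖ ^ 2
      = ‖WithLp.toLp 2 (B *ᵥ fun j ↦ RCLike.re (w j))‖ ^ 2 +
          ‖WithLp.toLp 2 (B *ᵥ fun j ↦ RCLike.im (w j))‖ ^ 2 := by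
        rw [norm_sq_eq_norm_re_sq_add_norm_im_sq, ← hre, ← him]
    _ ≤ (‖B‖ * ‖WithLp.toLp 2 fun j ↦ RCLike.re (w j)‖) ^ 2 +
          (‖B‖ * ‖WithLp.toLp 2 fun j ↦ RCLike.im (w j)‖) ^ 2 := by
        gcongr <;> exact B.l2_opNorm_mulVec (WithLp.toLp 2 _)
    _ = (‖B‖ * ‖w‖) ^ 2 := by
        rw [mul_pow, mul_pow, mul_pow, ← mul_add, ← norm_sq_eq_norm_re_sq_add_norm_im_sq]

theorem norm_le_l2_opNorm_of_mem_spectrum_map {B : Matrix n n ℝ} {z : 𝕜}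
    (hz : z ∈ spectrum 𝕜 (B.map (algebraMap ℝ 𝕜))) : ‖z‖ ≤ ‖B‖ := by
  cases isEmpty_or_nonempty n
  · simp at hz
  · exact (spectrum.norm_le_norm_of_mem hz).trans (l2_opNorm_map_algebraMap_le B)

theorem norm_le_of_mem_spectrum_map {B : Matrix n n ℝ} {c : ℝ} (hc : 0 ≤ c)
    (hB : ∀ v, ‖toEuclideanLin B v‖ ≤ c * ‖v‖) {z : 𝕜}
    (hz : z ∈ spectrum 𝕜 (B.map (algebraMap ℝ 𝕜))) : ‖z‖ ≤ c :=
  (norm_le_l2_opNorm_of_mem_spectrum_map hz).trans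
    (ContinuousLinearMap.opNorm_le_bound _ hc hB)

end OperatorNorm

theorem pow_div_mul_one_sub_le_two_mul_pow {r : ℝ} (h0 : 0 ≤ r) (hr : r ≤ 1 / 2) {N : ℕ}
    (hN : N ≠ 0) : r ^ N / (N * (1 - r)) ≤ 2 * r ^ N := by
  have hN1 : (1 : ℝ) ≤ N := mod_cast Nat.one_le_iff_ne_zero.2 hN
  have hden : 1 / 2 ≤ N * (1 - r) := by nlinarith
  calc r ^ N / (N * (1 - r)) ≤ r ^ N / (1 / 2) := by gcongr
    _ = 2 * r ^ N := by ring

/-- **Log-determinant expansion.** Let `B` be a real `d × d` matrix whose operator norm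
(with respect to the Euclidean norm on `ℝ^d`) is at most `nB ≤ 1/2`.  Then
`det (I + B) > 0` and
`|log det (I + B) − Σ_{k=1}^{N−1} ((−1)^{k+1}/k)·tr(B^k)| ≤ 2 d nB^N`. -/
theorem logdet_expansion (d N : ℕ) (hd : 1 ≤ d) (hN : 2 ≤ N)
    (B : Matrix (Fin d) (Fin d) ℝ) (nB : ℝ)
    (hB : ∀ v : EuclideanSpace ℝ (Fin d), ‖Matrix.toEuclideanLin B v‖ ≤ nB * ‖v‖)
    (hnB : nB ≤ 1 / 2) :
    0 < (1 + B).det ∧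
      |Real.log (1 + B).det -
          ∑ k ∈ Finset.Icc 1 (N - 1), (-1 : ℝ) ^ (k + 1) / k * Matrix.trace (B ^ k)| ≤
        2 * d * nB ^ N := by
  have hN0 : N ≠ 0 := by lia
  have hnB0 : 0 ≤ nB := by
    simpa using (norm_nonneg _).trans (hB (EuclideanSpace.single ⟨0, hd⟩ 1))
  obtain ⟨hpos, hlog⟩ := logdet_expansion_general (by linarith)
    (fun z hz ↦ norm_le_of_mem_spectrum_map hnB0 hB hz) hN0
  refine ⟨hpos, hlog.trans ?_⟩
  calc (Fintype.card (Fin d) : ℝ) * (nB ^ N / (N * (1 - nB))) ≤ d * (2 * nB ^ N) := by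
        grw [Fintype.card_fin, pow_div_mul_one_sub_le_two_mul_pow hnB0 hnB hN0]
    _ = 2 * d * nB ^ N := by ring
end
end

section
/- Let d ≥ 2 be an integer, λ > 0, μ ≥ 1, r > 0, and suppose λ·μ·r² ≥ 4d. Let f, g : ℝ^d → ℝ be measurable with g(x) ≥ 4/5 and f(x) ≤ μ·‖x‖²/2 for all ‖x‖ ≤ r. Then (λ/(2π))^{d/2} ∫_{‖x‖ ≤ r} g(x)·e^{−λ f(x)} dx ≥ (1/2)·μ^{−d/2}. -/
open MeasureTheory Real

noncomputable section

/-! Bounding `g` below by its minimum and `f` above by the quadratic reduces the claim to the mass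
that the Gaussian `e^{-b‖x‖²}` puts on the ball of radius `r`. Differentiating
`∫ e^{-b‖x‖²} = (π / b)^{n/2}` in `b` gives the second moment, and integrating the Markov-type
inequality `1 - ‖x‖² / r² ≤ 1_{‖x‖ ≤ r}` against the Gaussian shows that this mass is at least the
proportion `1 - n / (2br²)` of the total one.
-/

lemma mul_exp_neg_mul_le {b : ℝ} (hb : 0 < b) (t : ℝ) :
    t * exp (-b * t) ≤ 2 / b * exp (-(b / 2) * t) := by
  have ht : t ≤ 2 / b * exp (b / 2 * t) := by
    rw [div_mul_eq_mul_div, le_div_iff₀ hb]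
    linarith [add_one_le_exp (b / 2 * t)]
  calc t * exp (-b * t) ≤ 2 / b * exp (b / 2 * t) * exp (-b * t) := by gcongr
    _ = 2 / b * exp (-(b / 2) * t) := by
      rw [mul_assoc, ← exp_add]
      ring_nf

lemma hasDerivAt_div_rpow {a b : ℝ} (ha : 0 < a) (hb : 0 < b) (p : ℝ) :
    HasDerivAt (fun s ↦ (a / s) ^ p) (-(p / b * (a / b) ^ p)) b := by
  have hdiv : HasDerivAt (fun s ↦ a / s) (-a / b ^ 2) b := by
    simpa using (hasDerivAt_const b a).fun_div (hasDerivAt_id b) hb.ne'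
  have hab : a / b ≠ 0 := by positivity
  convert! hdiv.rpow_const (p := p) (.inl hab) using 1
  rw [rpow_sub_one hab]
  field_simp

lemma div_two_pi_rpow_mul_pi_div_rpow {a b : ℝ} (ha : 0 < a) (hb : 0 < b) (p : ℝ) :
    (a / (2 * π)) ^ p * (π / (a * b / 2)) ^ p = b ^ (-p) := by
  rw [← mul_rpow (by positivity) (by positivity), rpow_neg hb.le, ← inv_rpow hb.le]
  congr 1
  field_simp

lemma ofReal_mul_setIntegral_exp_neg_le_setLIntegral {α : Type*} [MeasurableSpace α]
    {ν : Measure α} {s : Set α} (hs : MeasurableSet s) {f g φ : α → ℝ} {c : ℝ} (hc : 0 ≤ c)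
    (hφ : IntegrableOn (fun x ↦ exp (-φ x)) s ν) (hg : ∀ x ∈ s, c ≤ g x)
    (hf : ∀ x ∈ s, f x ≤ φ x) :
    ENNReal.ofReal (c * ∫ x in s, exp (-φ x) ∂ν) ≤
      ∫⁻ x in s, ENNReal.ofReal (g x * exp (-f x)) ∂ν := by
  rw [← integral_const_mul, ofReal_integral_eq_lintegral_ofReal (hφ.const_mul c)
    (.of_forall fun x ↦ by positivity)]
  refine setLIntegral_mono' hs fun x hx ↦ ENNReal.ofReal_le_ofReal ?_
  exact mul_le_mul (hg x hx) (exp_le_exp.2 (neg_le_neg (hf x hx))) (exp_pos _).le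
    (hc.trans (hg x hx))

section Gaussian

variable {V : Type*} [NormedAddCommGroup V] [InnerProductSpace ℝ V] [FiniteDimensional ℝ V]
  [MeasurableSpace V] [BorelSpace V]

lemma integrable_exp_neg_mul_sq_norm {b : ℝ} (hb : 0 < b) :
    Integrable (fun x : V ↦ exp (-b * ‖x‖ ^ 2)) := by
  refine .of_integral_ne_zero ?_
  rw [GaussianFourier.integral_rexp_neg_mul_sq_norm hb]
  positivity

lemma integrable_sq_norm_mul_exp_neg_mul_sq_norm {b : ℝ} (hb : 0 < b) :
    Integrable (fun x : V ↦ ‖x‖ ^ 2 * exp (-b * ‖x‖ ^ 2)) := by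
  refine ((integrable_exp_neg_mul_sq_norm (half_pos hb)).const_mul (2 / b)).mono' (by fun_prop)
    (.of_forall fun x ↦ ?_)
  rw [norm_of_nonneg (by positivity)]
  exact mul_exp_neg_mul_le hb _

lemma hasDerivAt_integral_exp_neg_mul_sq_norm {b : ℝ} (hb : 0 < b) :
    HasDerivAt (fun s ↦ ∫ x : V, exp (-s * ‖x‖ ^ 2))
      (-∫ x : V, ‖x‖ ^ 2 * exp (-b * ‖x‖ ^ 2)) b := by
  rw [← integral_neg]
  refine (hasDerivAt_integral_of_dominated_loc_of_deriv_le (Ioi_mem_nhds (half_lt_self hb))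
    (F' := fun s (x : V) ↦ -(‖x‖ ^ 2 * exp (-s * ‖x‖ ^ 2)))
    (.of_forall fun s ↦ by fun_prop) (integrable_exp_neg_mul_sq_norm hb) (by fun_prop)
    (.of_forall fun x s hs ↦ ?_) (integrable_sq_norm_mul_exp_neg_mul_sq_norm (half_pos hb))
    (.of_forall fun x s _ ↦ ?_)).2
  · have hs : b / 2 ≤ s := le_of_lt hs
    rw [norm_neg, norm_of_nonneg (by positivity)]
    gcongr
  · convert! ((hasDerivAt_neg s).mul_const (‖x‖ ^ 2)).exp using 1
    ring

lemma integral_sq_norm_mul_exp_neg_mul_sq_norm {b : ℝ} (hb : 0 < b) :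
    ∫ x : V, ‖x‖ ^ 2 * exp (-b * ‖x‖ ^ 2) =
      Module.finrank ℝ V / (2 * b) * (π / b) ^ (Module.finrank ℝ V / 2 : ℝ) := by
  have hclosed : (fun s ↦ ∫ x : V, exp (-s * ‖x‖ ^ 2)) =ᶠ[nhds b]
      fun s ↦ (π / s) ^ (Module.finrank ℝ V / 2 : ℝ) := by
    filter_upwards [Ioi_mem_nhds hb] with s hs
    exact GaussianFourier.integral_rexp_neg_mul_sq_norm hs
  have hderiv := (hasDerivAt_div_rpow pi_pos hb _).congr_of_eventuallyEq hclosed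
  rw [← neg_inj.1 (hderiv.unique (hasDerivAt_integral_exp_neg_mul_sq_norm hb)), div_div]

lemma one_sub_mul_le_setIntegral_closedBall_exp_neg_mul_sq_norm {b r : ℝ} (hb : 0 < b)
    (hr : 0 < r) :
    (1 - Module.finrank ℝ V / (2 * b * r ^ 2)) * (π / b) ^ (Module.finrank ℝ V / 2 : ℝ) ≤
      ∫ x in Metric.closedBall (0 : V) r, exp (-b * ‖x‖ ^ 2) := by
  have hint := integrable_exp_neg_mul_sq_norm (V := V) hb
  have hint₂ := (integrable_sq_norm_mul_exp_neg_mul_sq_norm (V := V) hb).const_mul (r ^ 2)⁻¹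
  have hball : MeasurableSet (Metric.closedBall (0 : V) r) := measurableSet_closedBall
  calc
    _ = ∫ x : V, (exp (-b * ‖x‖ ^ 2) - (r ^ 2)⁻¹ * (‖x‖ ^ 2 * exp (-b * ‖x‖ ^ 2))) := by
      rw [integral_sub hint hint₂, integral_const_mul,
        integral_sq_norm_mul_exp_neg_mul_sq_norm hb,
        GaussianFourier.integral_rexp_neg_mul_sq_norm hb]
      field_simp
    _ ≤ ∫ x : V, (Metric.closedBall 0 r).indicator (fun x ↦ exp (-b * ‖x‖ ^ 2)) x := by
      refine integral_mono (hint.sub hint₂) (hint.indicator hball) fun x ↦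
        Set.le_indicator_apply (fun _ ↦ sub_le_self _ (by positivity)) fun hx ↦ sub_nonpos.2 ?_
      have hrx : r ≤ ‖x‖ := (not_le.1 (mt mem_closedBall_zero_iff.2 hx)).le
      rw [← mul_assoc]
      exact le_mul_of_one_le_left (exp_pos _).le ((one_le_inv_mul₀ (by positivity)).2 (by gcongr))
    _ = _ := integral_indicator hball

/-- `δ` bounds the proportion of the mass of `exp (-(lam * μ / 2) * ‖x‖ ^ 2)` outside the ball. -/
theorem laplace_local_lower_bound_general {lam μ r c δ : ℝ} (hlam : 0 < lam) (hμ : 0 < μ)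
    (hr : 0 < r) (hc : 0 ≤ c) (hδ : Module.finrank ℝ V ≤ δ * (lam * μ * r ^ 2)) {f g : V → ℝ}
    (hg : ∀ x, ‖x‖ ≤ r → c ≤ g x) (hf : ∀ x, ‖x‖ ≤ r → f x ≤ μ * ‖x‖ ^ 2 / 2) :
    ENNReal.ofReal (c * (1 - δ) * μ ^ (-(Module.finrank ℝ V : ℝ) / 2)) ≤
      ENNReal.ofReal ((lam / (2 * π)) ^ ((Module.finrank ℝ V : ℝ) / 2)) *
        ∫⁻ x in Metric.closedBall (0 : V) r, ENNReal.ofReal (g x * exp (-(lam * f x))) := by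
  set p : ℝ := Module.finrank ℝ V / 2 with hp
  set b := lam * μ / 2 with hb_def
  have hb : 0 < b := by positivity
  have hgauss : (1 - δ) * (π / b) ^ p ≤
      ∫ x in Metric.closedBall (0 : V) r, exp (-(b * ‖x‖ ^ 2)) := by
    simp only [← neg_mul]
    refine le_trans ?_ (one_sub_mul_le_setIntegral_closedBall_exp_neg_mul_sq_norm hb hr)
    gcongr
    rwa [div_le_iff₀ (by positivity), hb_def, mul_div_cancel₀ _ two_ne_zero]
  have hcompare := ofReal_mul_setIntegral_exp_neg_le_setLIntegral (ν := volume)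
    (measurableSet_closedBall (x := (0 : V)) (ε := r)) (f := fun x ↦ lam * f x) (g := g)
    (φ := fun x ↦ b * ‖x‖ ^ 2) hc
    (by simpa only [neg_mul] using (integrable_exp_neg_mul_sq_norm hb).integrableOn)
    (fun x hx ↦ hg x (mem_closedBall_zero_iff.1 hx))
    (fun x hx ↦ (mul_le_mul_of_nonneg_left (hf x (mem_closedBall_zero_iff.1 hx)) hlam.le).trans_eq
      (by ring))
  refine le_trans ?_ (mul_le_mul_right hcompare _)
  rw [← ENNReal.ofReal_mul (by positivity), neg_div, ← hp,
    ← div_two_pi_rpow_mul_pi_div_rpow hlam hμ]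
  refine ENNReal.ofReal_le_ofReal ?_
  calc c * (1 - δ) * ((lam / (2 * π)) ^ p * (π / b) ^ p)
      = (lam / (2 * π)) ^ p * (c * ((1 - δ) * (π / b) ^ p)) := by ring
    _ ≤ _ := by gcongr

end Gaussian

/-- **Lower bound on a local Laplace integral.** If `g ≥ 4/5` and `f ≤ μ‖x‖²/2` on the ball
of radius `r`, and `λμr² ≥ 4d`, then
`(λ/(2π))^{d/2} ∫_{‖x‖≤r} g(x) e^{−λ f(x)} dx ≥ (1/2) μ^{−d/2}`.
(The integral of the nonnegative integrand is taken in the Lebesgue sense.) -/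
theorem laplace_local_lower_bound (d : ℕ) (hd : 2 ≤ d) (lam μ r : ℝ)
    (hlam : 0 < lam) (hμ : 1 ≤ μ) (hr : 0 < r) (hbig : 4 * d ≤ lam * μ * r ^ 2)
    (f g : EuclideanSpace ℝ (Fin d) → ℝ) (hfm : Measurable f) (hgm : Measurable g)
    (hg : ∀ x : EuclideanSpace ℝ (Fin d), ‖x‖ ≤ r → 4 / 5 ≤ g x)
    (hf : ∀ x : EuclideanSpace ℝ (Fin d), ‖x‖ ≤ r → f x ≤ μ * ‖x‖ ^ 2 / 2) :
    ENNReal.ofReal ((1 / 2) * μ ^ (-(d : ℝ) / 2)) ≤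
      ENNReal.ofReal ((lam / (2 * π)) ^ ((d : ℝ) / 2)) *
        ∫⁻ x in Metric.closedBall (0 : EuclideanSpace ℝ (Fin d)) r,
          ENNReal.ofReal (g x * Real.exp (-(lam * f x))) := by
  have hgeneral := laplace_local_lower_bound_general (δ := 1 / 4) hlam (by linarith) hr
    (by norm_num) (by rw [finrank_euclideanSpace_fin]; linarith) hg hf
  rw [finrank_euclideanSpace_fin] at hgeneral
  exact (ENNReal.ofReal_le_ofReal (by gcongr; norm_num)).trans hgeneral
end
end

section
/- Let d ≥ 1 be an integer, λ > 0, and let a be a real number with a ≥ 2d. Then (λ/(2π))^{d/2} ∫_{ℝ^d} (1 + ‖x‖)^{−a} dx ≤ 2·((4/e)·d·λ/a²)^{d/2}. -/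
open MeasureTheory Real

noncomputable section

/-!
In polar coordinates the integral is `d ω_d ∫₀^∞ y^(d-1) (1+y)^(-a) dy`, where `ω_d` is the volume
of the unit ball. Substituting `y = e^u - 1` and using `e^u - 1 ≤ u e^u` bounds the radial integral
by `∫₀^∞ u^(d-1) e^(-(a-d)u) du = Γ(d) / (a-d)^d`. By Legendre's duplication formula,
`ω_d Γ(d+1)` is `(2√π)^d Γ((d+1)/2) / √π`. Finally `Γ(x + 1/2) = 2 ∫₀^∞ u^(2x) e^(-u²) du`, and
`log (u^(2x) e^(-u²))` is maximal at `u = √x` with second derivative at most `-2`, so the integrand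
lies below the Gaussian `(x/e)^x e^(-(u-√x)²)`, which gives `Γ(x + 1/2) ≤ 2√π (x/e)^x`.
For `a ≥ 2d` one has `a - d ≥ a/2`.
-/

section RadialIntegral

open Set

lemma image_exp_sub_one_Ioi_zero : (fun u : ℝ => exp u - 1) '' Ioi 0 = Ioi 0 := by
  ext y
  constructor
  · rintro ⟨u, hu, rfl⟩
    exact sub_pos.2 (one_lt_exp_iff.2 hu)
  · intro (hy : 0 < y)
    exact ⟨log (1 + y), log_pos (by linarith), by simp [exp_log (by linarith : 0 < 1 + y)]⟩

lemma integral_Ioi_zero_eq_integral_exp_sub_one {F : Type*} [NormedAddCommGroup F]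
    [NormedSpace ℝ F] (f : ℝ → F) :
    ∫ y in Ioi (0 : ℝ), f y = ∫ u in Ioi (0 : ℝ), exp u • f (exp u - 1) := by
  have hderiv (u : ℝ) (_ : u ∈ Ioi (0 : ℝ)) :
      HasDerivWithinAt (fun u => exp u - 1) (exp u) (Ioi 0) u :=
    ((hasDerivAt_exp u).sub_const 1).hasDerivWithinAt
  have hinj : InjOn (fun u : ℝ => exp u - 1) (Ioi 0) :=
    ((sub_left_injective (b := (1 : ℝ))).comp exp_injective).injOn
  simpa only [image_exp_sub_one_Ioi_zero, abs_exp] using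
    integral_image_eq_integral_abs_deriv_smul measurableSet_Ioi hderiv hinj f

lemma exp_sub_one_le_mul_exp (u : ℝ) : exp u - 1 ≤ u * exp u := by
  have h : (1 - u) * exp u ≤ exp (-u) * exp u := by
    gcongr
    exact one_sub_le_exp_neg u
  rw [← exp_add, neg_add_cancel, exp_zero] at h
  linarith

lemma exp_mul_exp_sub_one_rpow_mul_exp_rpow_neg_le {s u : ℝ} (hs : 1 ≤ s) (hu : 0 ≤ u) (a : ℝ) :
    exp u * ((exp u - 1) ^ (s - 1) * exp u ^ (-a)) ≤ u ^ (s - 1) * exp (-((a - s) * u)) :=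
  calc exp u * ((exp u - 1) ^ (s - 1) * exp u ^ (-a))
      ≤ exp u * ((u * exp u) ^ (s - 1) * exp u ^ (-a)) := by
        gcongr
        · exact sub_nonneg.2 (one_le_exp hu)
        · exact exp_sub_one_le_mul_exp u
    _ = u ^ (s - 1) * exp (u + u * (s - 1) + u * (-a)) := by
        rw [mul_rpow hu (exp_pos u).le, ← exp_mul, ← exp_mul, exp_add, exp_add]
        ring
    _ = u ^ (s - 1) * exp (-((a - s) * u)) := by ring_nf

lemma integral_rpow_mul_one_add_rpow_neg_le {s a : ℝ} (hs : 1 ≤ s) (ha : s < a) :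
    ∫ y in Ioi (0 : ℝ), y ^ (s - 1) * (1 + y) ^ (-a) ≤ Gamma s / (a - s) ^ s := by
  have has : 0 < a - s := sub_pos.2 ha
  have hgamma : IntegrableOn (fun u : ℝ => u ^ (s - 1) * exp (-((a - s) * u))) (Ioi 0) := by
    simpa only [rpow_one, neg_mul] using
      integrableOn_rpow_mul_exp_neg_mul_rpow (s := s - 1) (by linarith) one_pos has
  calc ∫ y in Ioi (0 : ℝ), y ^ (s - 1) * (1 + y) ^ (-a)
      = ∫ u in Ioi (0 : ℝ), exp u * ((exp u - 1) ^ (s - 1) * exp u ^ (-a)) := by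
        simp only [integral_Ioi_zero_eq_integral_exp_sub_one fun y : ℝ => y ^ (s - 1) * _,
          smul_eq_mul, add_sub_cancel]
    _ ≤ ∫ u in Ioi (0 : ℝ), u ^ (s - 1) * exp (-((a - s) * u)) := by
        refine integral_mono_of_nonneg ?_ hgamma ?_ <;>
          filter_upwards [ae_restrict_mem measurableSet_Ioi] with u (hu : 0 < u)
        · have : 0 ≤ exp u - 1 := sub_nonneg.2 (one_le_exp hu.le)
          simp only [Pi.zero_apply]
          positivity
        · exact exp_mul_exp_sub_one_rpow_mul_exp_rpow_neg_le hs hu.le a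
    _ = Gamma s / (a - s) ^ s := by
        rw [integral_rpow_mul_exp_neg_mul_Ioi (by linarith) has, one_div, inv_rpow has.le,
          inv_mul_eq_div]

end RadialIntegral

section GammaBound

open Set

lemma rpow_two_mul_mul_exp_neg_sq_le {x u : ℝ} (hx : 0 < x) (hu : 0 < u) :
    u ^ (2 * x) * exp (-u ^ 2) ≤ (x / exp 1) ^ x * exp (-(u - √x) ^ 2) := by
  have hsq : √x ^ 2 = x := sq_sqrt hx.le
  have hlog : log u - log x / 2 ≤ u / √x - 1 := by
    rw [← log_sqrt hx.le, ← log_div hu.ne' (by positivity)]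
    exact log_le_sub_one_of_pos (by positivity)
  have hmul : x * (u / √x) = u * √x := by
    rw [← mul_div_assoc, mul_comm x u, mul_div_assoc, div_sqrt]
  rw [rpow_def_of_pos hu, rpow_def_of_pos (by positivity), log_div hx.ne' (exp_ne_zero 1), log_exp,
    ← exp_add, ← exp_add]
  refine exp_le_exp.2 ?_
  linear_combination 2 * x * hlog + 2 * hmul + hsq

lemma Gamma_add_half_le {x : ℝ} (hx : 0 < x) :
    Gamma (x + 1 / 2) ≤ 2 * √π * (x / exp 1) ^ x := by
  have hgauss : Integrable fun u : ℝ => exp (-(u - √x) ^ 2) := by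
    simpa only [neg_mul, one_mul] using (integrable_exp_neg_mul_sq one_pos).comp_sub_right √x
  calc Gamma (x + 1 / 2)
      = 2 * ∫ u in Ioi (0 : ℝ), u ^ (2 * x) * exp (-u ^ 2) := by
        have h := integral_rpow_mul_exp_neg_rpow (p := 2) (q := 2 * x) two_pos (by linarith)
        simp only [rpow_two] at h
        rw [h, show (2 * x + 1) / 2 = x + 1 / 2 by ring]
        ring
    _ ≤ 2 * ∫ u in Ioi (0 : ℝ), (x / exp 1) ^ x * exp (-(u - √x) ^ 2) := by
        gcongr ?_ * ?_
        refine integral_mono_of_nonneg ?_ (hgauss.const_mul _).integrableOn ?_ <;>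
          filter_upwards [ae_restrict_mem measurableSet_Ioi] with u (hu : 0 < u)
        · simp only [Pi.zero_apply]
          positivity
        · exact rpow_two_mul_mul_exp_neg_sq_le hx hu
    _ ≤ 2 * ∫ u : ℝ, (x / exp 1) ^ x * exp (-(u - √x) ^ 2) := by
        gcongr ?_ * ?_
        exact setIntegral_le_integral (hgauss.const_mul _) (.of_forall fun u => by positivity)
    _ = 2 * √π * (x / exp 1) ^ x := by
        have h : ∫ u : ℝ, exp (-u ^ 2) = √π := by simpa using integral_gaussian 1
        rw [integral_const_mul, integral_sub_right_eq_self (fun u : ℝ => exp (-u ^ 2)), h]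
        ring

end GammaBound

section InnerProductSpace

open Module

variable {E : Type*} [NormedAddCommGroup E] [InnerProductSpace ℝ E] [FiniteDimensional ℝ E]
  [MeasurableSpace E] [BorelSpace E] [Nontrivial E]

variable (E) in
lemma volume_real_unitBall_mul_Gamma :
    volume.real (Metric.ball (0 : E) 1) * Gamma (finrank ℝ E + 1) =
      (2 * √π) ^ finrank ℝ E * Gamma (finrank ℝ E / 2 + 1 / 2) / √π := by
  set d := finrank ℝ E
  have hpos : 0 < Gamma ((d : ℝ) / 2 + 1) := Gamma_pos_of_pos (by positivity)
  have hvol : volume.real (Metric.ball (0 : E) 1) = √π ^ d / Gamma (d / 2 + 1) := by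
    rw [Measure.real, InnerProductSpace.volume_ball, ENNReal.ofReal_one, one_pow, one_mul,
      ENNReal.toReal_ofReal (div_nonneg (by positivity) hpos.le)]
  have hdup : Gamma ((d : ℝ) / 2 + 1 / 2) * Gamma ((d : ℝ) / 2 + 1) =
      Gamma (d + 1) / 2 ^ d * √π := by
    have h := Gamma_mul_Gamma_add_half ((d : ℝ) / 2 + 1 / 2)
    rwa [show (d : ℝ) / 2 + 1 / 2 + 1 / 2 = d / 2 + 1 by ring,
      show 2 * ((d : ℝ) / 2 + 1 / 2) = d + 1 by ring, show 1 - ((d : ℝ) + 1) = -d by ring,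
      rpow_neg zero_le_two, rpow_natCast, ← div_eq_mul_inv] at h
  rw [hvol, mul_pow]
  field_simp at hdup ⊢
  linear_combination -hdup

lemma integral_one_add_norm_rpow_neg_le_volume_mul {a : ℝ} (ha : finrank ℝ E < a) :
    ∫ x : E, (1 + ‖x‖) ^ (-a) ≤
      volume.real (Metric.ball (0 : E) 1) * Gamma (finrank ℝ E + 1) /
        (a - finrank ℝ E) ^ finrank ℝ E := by
  have hd : 1 ≤ finrank ℝ E := finrank_pos
  have hradial := integral_rpow_mul_one_add_rpow_neg_le (Nat.one_le_cast.2 hd) ha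
  simp only [← Nat.cast_pred hd, rpow_natCast] at hradial
  calc ∫ x : E, (1 + ‖x‖) ^ (-a)
      = finrank ℝ E * (volume.real (Metric.ball (0 : E) 1) *
          ∫ y in Set.Ioi (0 : ℝ), y ^ (finrank ℝ E - 1) * (1 + y) ^ (-a)) := by
        simpa only [nsmul_eq_mul, smul_eq_mul] using
          integral_fun_norm_addHaar (volume : Measure E) fun y : ℝ => (1 + y) ^ (-a)
    _ ≤ finrank ℝ E * (volume.real (Metric.ball (0 : E) 1) *
          (Gamma (finrank ℝ E) / (a - finrank ℝ E) ^ finrank ℝ E)) := by gcongr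
    _ = _ := by
        rw [Gamma_add_one (by positivity)]
        ring

lemma integral_one_add_norm_rpow_neg_le {a : ℝ} (ha : finrank ℝ E < a) :
    ∫ x : E, (1 + ‖x‖) ^ (-a) ≤
      2 * (2 * π * finrank ℝ E / (exp 1 * (a - finrank ℝ E) ^ 2)) ^ ((finrank ℝ E : ℝ) / 2) := by
  have hvol := integral_one_add_norm_rpow_neg_le_volume_mul ha
  rw [volume_real_unitBall_mul_Gamma] at hvol
  have hd : (0 : ℝ) < finrank ℝ E := Nat.cast_pos.2 finrank_pos
  set d := finrank ℝ E
  have had : 0 < a - d := sub_pos.2 ha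
  calc ∫ x : E, (1 + ‖x‖) ^ (-a)
      ≤ (2 * √π) ^ d * Gamma (d / 2 + 1 / 2) / √π / (a - d) ^ d := hvol
    _ ≤ (2 * √π) ^ d * (2 * √π * ((d : ℝ) / 2 / exp 1) ^ ((d : ℝ) / 2)) / √π / (a - d) ^ d := by
        gcongr
        exact Gamma_add_half_le (half_pos hd)
    _ = 2 * ((2 * √π / (a - d)) ^ d * ((d : ℝ) / 2 / exp 1) ^ ((d : ℝ) / 2)) := by
        rw [div_pow]
        field_simp
    _ = 2 * (((2 * √π / (a - d)) ^ 2) ^ ((d : ℝ) / 2) * ((d : ℝ) / 2 / exp 1) ^ ((d : ℝ) / 2)) := by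
        rw [← rpow_natCast _ 2, ← rpow_mul (by positivity), Nat.cast_two,
          mul_div_cancel₀ _ two_ne_zero, rpow_natCast]
    _ = 2 * (2 * π * d / (exp 1 * (a - d) ^ 2)) ^ ((d : ℝ) / 2) := by
        rw [← mul_rpow (by positivity) (by positivity), div_pow, mul_pow, sq_sqrt pi_pos.le]
        congr 2
        field_simp

theorem polynomial_tail_bound_general {lam a : ℝ} (hlam : 0 < lam) (ha : 2 * finrank ℝ E ≤ a) :
    (lam / (2 * π)) ^ ((finrank ℝ E : ℝ) / 2) * ∫ x : E, (1 + ‖x‖) ^ (-a) ≤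
      2 * (4 / exp 1 * finrank ℝ E * lam / a ^ 2) ^ ((finrank ℝ E : ℝ) / 2) := by
  have hd : (0 : ℝ) < finrank ℝ E := Nat.cast_pos.2 finrank_pos
  have hbound := integral_one_add_norm_rpow_neg_le (E := E) (a := a) (by linarith)
  set d := finrank ℝ E
  have ha₀ : 0 < a / 2 := by linarith
  have hhalf : a / 2 ≤ a - d := by linarith
  calc (lam / (2 * π)) ^ ((d : ℝ) / 2) * ∫ x : E, (1 + ‖x‖) ^ (-a)
      ≤ (lam / (2 * π)) ^ ((d : ℝ) / 2) *
          (2 * (2 * π * d / (exp 1 * (a - d) ^ 2)) ^ ((d : ℝ) / 2)) := by gcongr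
    _ ≤ (lam / (2 * π)) ^ ((d : ℝ) / 2) *
          (2 * (2 * π * d / (exp 1 * (a / 2) ^ 2)) ^ ((d : ℝ) / 2)) := by gcongr
    _ = 2 * (4 / exp 1 * d * lam / a ^ 2) ^ ((d : ℝ) / 2) := by
        rw [mul_left_comm, ← mul_rpow (by positivity) (by positivity)]
        congr 2
        field_simp
        norm_num

end InnerProductSpace

/-- **Polynomial-tail integral bound.** For `a ≥ 2d`,
`(λ/(2π))^{d/2} ∫_{ℝ^d} (1+‖x‖)^{−a} dx ≤ 2 ((4/e)·d·λ/a²)^{d/2}`. -/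
theorem polynomial_tail_bound (d : ℕ) (hd : 1 ≤ d) (lam a : ℝ) (hlam : 0 < lam)
    (ha : 2 * d ≤ a) :
    (lam / (2 * π)) ^ ((d : ℝ) / 2) *
        ∫ x : EuclideanSpace ℝ (Fin d), (1 + ‖x‖) ^ (-a) ≤
      2 * ((4 / Real.exp 1) * d * lam / a ^ 2) ^ ((d : ℝ) / 2) := by
  have : Nonempty (Fin d) := ⟨⟨0, hd⟩⟩
  simpa only [finrank_euclideanSpace_fin] using
    polynomial_tail_bound_general (E := EuclideanSpace ℝ (Fin d)) hlam (by simpa using ha)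
end
end

section
/- Let d ≥ 2 be an integer, λ > 0, and let κ, R > 0 satisfy 0 < κ ≤ 1/e and κR ≥ 2. Set ε = d/λ. Then (λ/(2π))^{d/2} ∫_{‖x‖ ≥ R√ε} exp(−κ·√(λd)·‖x‖) dx ≤ exp(−d·(κR − 1/2 − log R)). -/
open MeasureTheory Real

noncomputable section

/-!
Polar coordinates turn the integral of `exp (-c‖x‖)` over `‖x‖ ≥ s` into an upper incomplete Gamma
integral, and the tangent-line bound `y ^ p ≤ s ^ p * exp (p * (y / s - 1))` compares that integral
with an exponential one. The result is `volume (closedBall 0 s) * exp (-c s)` up to a factor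
`d / (c s - (d - 1))`, which is at most `1` as soon as `2 d ≤ c s`. Comparing the indicator of the
ball with a Gaussian of the optimal variance bounds its volume by `(2 π e s² / d) ^ (d / 2)`; for
`s = R √ε` the Gaussian normalisation then leaves `(e R²) ^ (d / 2)`, whence the terms `1 / 2` and
`log R` in the exponent.
-/

open Module Metric Set

lemma rpow_le_rpow_mul_exp {p s y : ℝ} (hp : 0 ≤ p) (hs : 0 < s) (hy : 0 ≤ y) :
    y ^ p ≤ s ^ p * exp (p * (y / s - 1)) := by
  have tangent : y / s ≤ exp (y / s - 1) := by linarith [add_one_le_exp (y / s - 1)]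
  calc y ^ p = s ^ p * (y / s) ^ p := by
        rw [← mul_rpow hs.le (by positivity), mul_div_cancel₀ y hs.ne']
    _ ≤ s ^ p * exp (y / s - 1) ^ p := by gcongr
    _ = s ^ p * exp (p * (y / s - 1)) := by rw [← exp_mul, mul_comm p]

lemma integral_Ioi_rpow_mul_exp_neg_mul_le {p c s : ℝ} (hp : 0 ≤ p) (hs : 0 < s)
    (hpc : p < c * s) :
    ∫ y in Ioi s, y ^ p * exp (-(c * y)) ≤ s ^ (p + 1) * exp (-(c * s)) / (c * s - p) := by
  have rate_neg : -(c - p / s) < 0 := by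
    rw [neg_lt_zero, sub_pos, div_lt_iff₀ hs]
    exact hpc
  have pointwise (y : ℝ) (hy : y ∈ Ioi s) :
      y ^ p * exp (-(c * y)) ≤ s ^ p * exp (-p) * exp (-(c - p / s) * y) :=
    calc y ^ p * exp (-(c * y))
        ≤ s ^ p * exp (p * (y / s - 1)) * exp (-(c * y)) := by
          gcongr
          exact rpow_le_rpow_mul_exp hp hs (hs.trans hy).le
      _ = s ^ p * exp (-p) * exp (-(c - p / s) * y) := by
          rw [mul_assoc, mul_assoc, ← exp_add, ← exp_add]
          ring_nf
  calc ∫ y in Ioi s, y ^ p * exp (-(c * y))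
      ≤ ∫ y in Ioi s, s ^ p * exp (-p) * exp (-(c - p / s) * y) := by
        refine integral_mono_of_nonneg ?_ ((integrableOn_exp_mul_Ioi rate_neg s).const_mul _)
          ((ae_restrict_mem measurableSet_Ioi).mono pointwise)
        filter_upwards [ae_restrict_mem measurableSet_Ioi] with y hy
        have : 0 < y := hs.trans hy
        positivity
    _ = s ^ p * exp (-(c * s)) / (c - p / s) := by
        rw [integral_const_mul, integral_exp_mul_Ioi rate_neg, neg_div_neg_eq, ← mul_div_assoc,
          mul_assoc, ← exp_add]
        congr 3
        field_simp
        ring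
    _ = s ^ (p + 1) * exp (-(c * s)) / (c * s - p) := by
        rw [rpow_add_one hs.ne', ← mul_div_mul_right _ _ hs.ne', sub_mul, div_mul_cancel₀ p hs.ne']
        ring

section AddHaar

variable {E F : Type*} [NormedAddCommGroup E] [NormedSpace ℝ E] [FiniteDimensional ℝ E]
  [Nontrivial E] [MeasurableSpace E] [BorelSpace E] (μ : Measure E) [μ.IsAddHaarMeasure]
  [NormedAddCommGroup F] [NormedSpace ℝ F]

lemma setIntegral_le_norm_fun_norm_addHaar (f : ℝ → F) {s : ℝ} (hs : 0 ≤ s) :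
    ∫ x in {x : E | s ≤ ‖x‖}, f ‖x‖ ∂μ =
      finrank ℝ E • μ.real (ball 0 1) • ∫ y in Ioi s, y ^ (finrank ℝ E - 1) • f y := by
  have inter_ae_eq : (Ioi 0 ∩ Ici s : Set ℝ) =ᵐ[volume] Ioi s := by
    simpa only [Ioi_inter_Ioi, max_eq_right hs] using
      (ae_eq_refl (Ioi (0 : ℝ))).inter (Ioi_ae_eq_Ici (a := s)).symm
  calc ∫ x in {x : E | s ≤ ‖x‖}, f ‖x‖ ∂μ
      = ∫ x, (Ici s).indicator f ‖x‖ ∂μ :=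
        (integral_indicator (measurableSet_le measurable_const measurable_norm)).symm
    _ = finrank ℝ E • μ.real (ball 0 1) • ∫ y in Ioi s, y ^ (finrank ℝ E - 1) • f y := by
        rw [integral_fun_norm_addHaar, ← indicator_smul, setIntegral_indicator measurableSet_Ici,
          setIntegral_congr_set inter_ae_eq]

lemma setIntegral_le_norm_exp_neg_mul_norm_le {c s : ℝ} (hs : 0 < s)
    (hc : (finrank ℝ E : ℝ) - 1 < c * s) :
    ∫ x in {x : E | s ≤ ‖x‖}, exp (-(c * ‖x‖)) ∂μ ≤
      finrank ℝ E / (c * s - (finrank ℝ E - 1)) * (μ.real (closedBall 0 s) * exp (-(c * s))) := by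
  obtain ⟨n, hn⟩ := Nat.exists_eq_add_one_of_ne_zero (finrank_pos (R := ℝ) (M := E)).ne'
  have radial : ∫ y in Ioi s, y ^ n * exp (-(c * y)) ≤
      s ^ (n + 1) * exp (-(c * s)) / (c * s - n) := by
    exact_mod_cast integral_Ioi_rpow_mul_exp_neg_mul_le n.cast_nonneg hs (by simpa [hn] using hc)
  rw [setIntegral_le_norm_fun_norm_addHaar μ (fun y ↦ exp (-(c * y))) hs.le,
    Measure.addHaar_real_closedBall μ 0 hs.le, hn]
  simp only [nsmul_eq_mul, smul_eq_mul, Nat.add_sub_cancel]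
  calc ((n + 1 : ℕ) : ℝ) * (μ.real (ball 0 1) * ∫ y in Ioi s, y ^ n * exp (-(c * y)))
      ≤ ((n + 1 : ℕ) : ℝ) *
          (μ.real (ball 0 1) * (s ^ (n + 1) * exp (-(c * s)) / (c * s - n))) := by gcongr
    _ = _ := by
        push_cast
        ring

lemma setIntegral_le_norm_exp_neg_mul_norm_le_of_two_mul_finrank_le {c s : ℝ} (hs : 0 < s)
    (hc : 2 * finrank ℝ E ≤ c * s) :
    ∫ x in {x : E | s ≤ ‖x‖}, exp (-(c * ‖x‖)) ∂μ ≤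
      μ.real (closedBall 0 s) * exp (-(c * s)) := by
  have hd : (0 : ℝ) < finrank ℝ E := by exact_mod_cast finrank_pos
  exact (setIntegral_le_norm_exp_neg_mul_norm_le μ hs (by linarith)).trans <|
    mul_le_of_le_one_left (by positivity) <| div_le_one_of_le₀ (by linarith) (by linarith)

end AddHaar

section Volume

variable {E : Type*} [NormedAddCommGroup E] [InnerProductSpace ℝ E] [FiniteDimensional ℝ E]
  [MeasurableSpace E] [BorelSpace E]

lemma exp_neg_mul_sq_mul_volume_real_closedBall_le {b : ℝ} (hb : 0 < b) (x : E) (r : ℝ) :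
    exp (-b * r ^ 2) * volume.real (closedBall x r) ≤ (π / b) ^ (finrank ℝ E / 2 : ℝ) := by
  have gaussian := GaussianFourier.integral_rexp_neg_mul_sq_norm (V := E) hb
  have integrable : Integrable fun v : E ↦ exp (-b * ‖v‖ ^ 2) := by
    refine .of_integral_ne_zero ?_
    rw [gaussian]
    positivity
  rw [Measure.addHaar_real_closedBall_center, ← gaussian]
  calc exp (-b * r ^ 2) * volume.real (closedBall (0 : E) r)
      ≤ ∫ v in closedBall (0 : E) r, exp (-b * ‖v‖ ^ 2) := by
        refine setIntegral_ge_of_const_le_real measurableSet_closedBall measure_closedBall_lt_top.ne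
          (fun v hv ↦ ?_) integrable.integrableOn
        have norm_le : ‖v‖ ≤ r := mem_closedBall_zero_iff.1 hv
        rw [neg_mul, neg_mul]
        gcongr
    _ ≤ ∫ v : E, exp (-b * ‖v‖ ^ 2) :=
        setIntegral_le_integral integrable (.of_forall fun _ ↦ (exp_pos _).le)

lemma volume_real_closedBall_le [Nontrivial E] (x : E) {r : ℝ} (hr : 0 < r) :
    volume.real (closedBall x r) ≤
      (2 * π * exp 1 * r ^ 2 / finrank ℝ E) ^ (finrank ℝ E / 2 : ℝ) := by
  have hd : (0 : ℝ) < finrank ℝ E := by exact_mod_cast finrank_pos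
  set d := (finrank ℝ E : ℝ)
  have hexp : -(d / (2 * r ^ 2)) * r ^ 2 = -(d / 2) := by field_simp
  -- `b = d / (2 r²)` minimises `(π / b) ^ (d / 2) * exp (b r²)`.
  have chernoff := exp_neg_mul_sq_mul_volume_real_closedBall_le
    (b := d / (2 * r ^ 2)) (by positivity) x r
  rw [hexp, exp_neg, inv_mul_le_iff₀ (exp_pos _)] at chernoff
  calc volume.real (closedBall x r)
      ≤ exp (d / 2) * (π / (d / (2 * r ^ 2))) ^ (d / 2) := chernoff
    _ = (2 * π * exp 1 * r ^ 2 / d) ^ (d / 2) := by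
        rw [← exp_one_rpow, ← mul_rpow (exp_pos 1).le (by positivity)]
        congr 1
        field_simp

theorem exponential_tail_bound_general [Nontrivial E] {lam κ R : ℝ} (hlam : 0 < lam) (hR : 0 < R)
    (hκR : 2 ≤ κ * R) :
    (lam / (2 * π)) ^ (finrank ℝ E / 2 : ℝ) *
        ∫ x in {x : E | R * √(finrank ℝ E / lam) ≤ ‖x‖},
          exp (-(κ * √(lam * finrank ℝ E) * ‖x‖)) ≤
      exp (-(finrank ℝ E * (κ * R - 1 / 2 - log R))) := by
  have hd : (0 : ℝ) < finrank ℝ E := by exact_mod_cast finrank_pos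
  set d := (finrank ℝ E : ℝ)
  set s := R * √(d / lam)
  have hs : 0 < s := by positivity
  have sq_s : s ^ 2 = R ^ 2 * (d / lam) := by rw [mul_pow, sq_sqrt (by positivity)]
  have rate_mul_s : κ * √(lam * d) * s = κ * R * d := by
    have sqrt_mul_sqrt : √(lam * d) * √(d / lam) = d := by
      rw [← sqrt_mul (by positivity), show lam * d * (d / lam) = d ^ 2 by field_simp,
        sqrt_sq (by positivity)]
    linear_combination κ * R * sqrt_mul_sqrt
  have tail : ∫ x in {x : E | s ≤ ‖x‖}, exp (-(κ * √(lam * d) * ‖x‖)) ≤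
      volume.real (closedBall (0 : E) s) * exp (-(κ * R * d)) := by
    rw [← rate_mul_s]
    refine setIntegral_le_norm_exp_neg_mul_norm_le_of_two_mul_finrank_le volume hs ?_
    rw [rate_mul_s]
    gcongr
  calc _ ≤ (lam / (2 * π)) ^ (d / 2) *
        ((2 * π * exp 1 * s ^ 2 / d) ^ (d / 2) * exp (-(κ * R * d))) := by
        grw [tail, volume_real_closedBall_le _ hs]
    _ = (exp 1 * R ^ 2) ^ (d / 2) * exp (-(κ * R * d)) := by
        rw [← mul_assoc, ← mul_rpow (by positivity) (by positivity), sq_s]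
        congr 2
        field_simp
    _ = _ := by
        rw [rpow_def_of_pos (by positivity), log_mul (exp_pos 1).ne' (by positivity), log_exp,
          log_pow, ← exp_add]
        push_cast
        ring_nf

end Volume

/-- **Exponential-tail integral bound.** For `d ≥ 2`, `0 < κ ≤ 1/e`, `κR ≥ 2` and `ε = d/λ`,
`(λ/(2π))^{d/2} ∫_{‖x‖ ≥ R√ε} exp(−κ√(λd)‖x‖) dx ≤ exp(−d(κR − 1/2 − log R))`. -/
theorem exponential_tail_bound (d : ℕ) (hd : 2 ≤ d) (lam κ R : ℝ) (hlam : 0 < lam)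
    (hκ0 : 0 < κ) (hκ : κ ≤ 1 / Real.exp 1) (hR : 0 < R) (hκR : 2 ≤ κ * R) :
    (lam / (2 * π)) ^ ((d : ℝ) / 2) *
        ∫ x in {x : EuclideanSpace ℝ (Fin d) | R * Real.sqrt ((d : ℝ) / lam) ≤ ‖x‖},
          Real.exp (-(κ * Real.sqrt (lam * d) * ‖x‖)) ≤
      Real.exp (-(d * (κ * R - 1 / 2 - Real.log R))) := by
  have : NeZero d := ⟨by lia⟩
  simpa using exponential_tail_bound_general (E := EuclideanSpace ℝ (Fin d)) hlam hR hκR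
end
end

section
/- There exist absolute constants c ∈ (0,1) and C > 0 such that for every integer d ≥ 4 and every real λ ≥ 3 satisfying log λ ≤ d and d³ ≤ c·λ², one has |log((λ/(2π))^{d/2} ∫_{ℝ^d} exp(−λ·(‖x‖²/2 + ‖x‖⁴/24)) dx) + d²/(24λ) + d/(12λ)| ≤ C·d³/λ². -/
open MeasureTheory Real

noncomputable section

/-!
Dividing by the Gaussian normalisation turns the integral into the expectation of `exp (-W)`, where
`W = λ a ‖x‖⁴` with `a = 1 / 24` and `x` is a centred Gaussian vector in dimension `d` of covariance
`λ⁻¹ I`; here `𝔼 W = a d (d + 2) / λ` is the sum of the two correction terms. Jensen's inequality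
gives `log 𝔼 exp (-W) ≥ -𝔼 W`. For the upper bound, if `λ ≥ 3 a d²` then `𝔼 W ≤ 1`, and
`exp u ≤ 1 + u + u²` for `u ≤ 1` gives `log 𝔼 exp (-W) ≤ -𝔼 W + Var W` with `Var W = O(d³ / λ²)`.
If `λ ≤ 3 a d²`, we instead linearise `‖x‖⁴ ≥ 2 s ‖x‖² - s²` at the typical value `s = d / λ` of
`‖x‖²`, which leaves an explicit Gaussian integral; the error `2 a d / λ` this causes is then
`O(d³ / λ²)` as well.
-/

open ProbabilityTheory Module

section RealInequalities

lemma exp_le_one_add_add_sq {u : ℝ} (hu : u ≤ 1) : exp u ≤ 1 + u + u ^ 2 := by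
  rcases le_or_gt (-1) u with hlow | hlow
  · linarith [(abs_le.1 (abs_exp_sub_one_sub_id_le (abs_le.2 ⟨hlow, hu⟩))).2]
  · have : exp u ≤ 1 := exp_le_one_iff.2 (by linarith)
    nlinarith

lemma sub_sq_div_two_le_log_one_add {t : ℝ} (ht : 0 ≤ t) : t - t ^ 2 / 2 ≤ log (1 + t) := by
  refine le_trans ?_ (le_log_one_add_of_nonneg ht)
  rw [le_div_iff₀ (by positivity)]
  nlinarith [pow_nonneg ht 3]

end RealInequalities

section ExponentialMoment

variable {Ω : Type*} {mΩ : MeasurableSpace Ω} {μ : Measure Ω} {X : Ω → ℝ}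

lemma integrable_exp_of_ae_le [IsFiniteMeasure μ] (hX : AEStronglyMeasurable X μ) {C : ℝ}
    (hC : ∀ᵐ ω ∂μ, X ω ≤ C) : Integrable (fun ω ↦ exp (X ω)) μ := by
  refine .of_bound (continuous_exp.comp_aestronglyMeasurable hX) (exp C) ?_
  filter_upwards [hC] with ω hω
  simpa using hω

variable [IsProbabilityMeasure μ]

lemma integral_le_log_integral_exp (hX : Integrable X μ)
    (hexp : Integrable (fun ω ↦ exp (X ω)) μ) : μ[X] ≤ log (∫ ω, exp (X ω) ∂μ) :=
  (le_log_iff_exp_le (integral_exp_pos hexp)).2 <|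
    convexOn_exp.map_integral_le continuous_exp.continuousOn isClosed_univ (by simp) hX hexp

lemma integral_exp_le_exp_integral_mul_one_add_variance (hX : MemLp X 2 μ)
    (hle : ∀ᵐ ω ∂μ, X ω ≤ μ[X] + 1) :
    ∫ ω, exp (X ω) ∂μ ≤ exp μ[X] * (1 + Var[X; μ]) := by
  have hX₁ : Integrable X μ := hX.integrable one_le_two
  have hcentred : Integrable (fun ω ↦ X ω - μ[X]) μ := hX₁.sub (integrable_const _)
  have hsq : Integrable (fun ω ↦ (X ω - μ[X]) ^ 2) μ := (hX.sub (memLp_const _)).integrable_sq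
  have hlin : Integrable (fun ω ↦ 1 + (X ω - μ[X])) μ := (integrable_const _).add hcentred
  calc ∫ ω, exp (X ω) ∂μ
      ≤ ∫ ω, exp μ[X] * (1 + (X ω - μ[X]) + (X ω - μ[X]) ^ 2) ∂μ := by
        refine integral_mono_ae (integrable_exp_of_ae_le hX.1 hle)
          ((hlin.add hsq).const_mul _) ?_
        filter_upwards [hle] with ω hω
        calc exp (X ω) = exp μ[X] * exp (X ω - μ[X]) := by rw [← exp_add, add_sub_cancel]
          _ ≤ _ := by gcongr; exact exp_le_one_add_add_sq (by linarith)
    _ = exp μ[X] * (1 + Var[X; μ]) := by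
        rw [integral_const_mul, integral_add hlin hsq, integral_add (integrable_const _) hcentred,
          integral_sub hX₁ (integrable_const _), variance_eq_integral hX.aemeasurable]
        simp

lemma log_integral_exp_le_integral_add_variance (hX : MemLp X 2 μ)
    (hle : ∀ᵐ ω ∂μ, X ω ≤ μ[X] + 1) : log (∫ ω, exp (X ω) ∂μ) ≤ μ[X] + Var[X; μ] := by
  have hvar : 0 ≤ Var[X; μ] := variance_nonneg X μ
  calc log (∫ ω, exp (X ω) ∂μ)
      ≤ log (exp μ[X] * (1 + Var[X; μ])) :=
        log_le_log (integral_exp_pos (integrable_exp_of_ae_le hX.1 hle))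
          (integral_exp_le_exp_integral_mul_one_add_variance hX hle)
    _ = μ[X] + log (1 + Var[X; μ]) := by rw [log_mul (exp_ne_zero _) (by positivity), log_exp]
    _ ≤ μ[X] + Var[X; μ] := by
        linarith [log_le_sub_one_of_pos (show 0 < 1 + Var[X; μ] by positivity)]

end ExponentialMoment

section IsotropicGaussian

variable {E : Type*} [NormedAddCommGroup E] [InnerProductSpace ℝ E] [FiniteDimensional ℝ E]
  [MeasurableSpace E] [BorelSpace E] {lam κ : ℝ}

variable (E) in
/-- The centred Gaussian measure on `E` with covariance `lam⁻¹` times the identity, against which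
the quartic factor is integrated. It is encoded as an exponential tilt of the volume, so that its
density is normalised by construction. -/
def isotropicGaussian (lam : ℝ) : Measure E := volume.tilted fun x ↦ -(lam / 2) * ‖x‖ ^ 2

lemma integrable_exp_neg_mul_norm_sq {b : ℝ} (hb : 0 < b) :
    Integrable fun x : E ↦ exp (-b * ‖x‖ ^ 2) := by
  refine .of_integral_ne_zero ?_
  rw [GaussianFourier.integral_rexp_neg_mul_sq_norm hb]
  positivity

lemma isProbabilityMeasure_isotropicGaussian (hlam : 0 < lam) :
    IsProbabilityMeasure (isotropicGaussian E lam) :=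
  isProbabilityMeasure_tilted (integrable_exp_neg_mul_norm_sq (half_pos hlam))

lemma integral_exp_isotropicGaussian (hlam : 0 < lam) (g : E → ℝ) :
    ∫ x, exp (g x) ∂isotropicGaussian E lam =
      (lam / (2 * π)) ^ ((finrank ℝ E : ℝ) / 2) * ∫ x : E, exp (-(lam / 2) * ‖x‖ ^ 2 + g x) := by
  rw [isotropicGaussian, integral_exp_tilted,
    GaussianFourier.integral_rexp_neg_mul_sq_norm (half_pos hlam), div_eq_inv_mul,
    ← inv_rpow (by positivity)]
  congr 2
  field_simp

lemma mgf_norm_sq_isotropicGaussian (hlam : 0 < lam) {t : ℝ} (ht : t < lam / 2) :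
    mgf (fun x ↦ ‖x‖ ^ 2) (isotropicGaussian E lam) t =
      (1 - 2 * t / lam) ^ (-((finrank ℝ E : ℝ) / 2)) := by
  have hb : 0 < lam / 2 - t := sub_pos.2 ht
  have hsum (x : E) : -(lam / 2) * ‖x‖ ^ 2 + t * ‖x‖ ^ 2 = -(lam / 2 - t) * ‖x‖ ^ 2 := by ring
  have hbase : 1 - 2 * t / lam = (lam / (2 * π) * (π / (lam / 2 - t)))⁻¹ := by field_simp
  simp only [mgf, integral_exp_isotropicGaussian hlam, hsum,
    GaussianFourier.integral_rexp_neg_mul_sq_norm hb]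
  rw [hbase, inv_rpow (by positivity), rpow_neg (by positivity), inv_inv,
    mul_rpow (by positivity) (by positivity)]

lemma Iio_subset_integrableExpSet_norm_sq (hlam : 0 < lam) :
    Set.Iio (lam / 2) ⊆ integrableExpSet (fun x ↦ ‖x‖ ^ 2) (isotropicGaussian E lam) := by
  intro t ht
  have hbase : 0 < 1 - 2 * t / lam := by
    rw [sub_pos, div_lt_one hlam]
    linarith [Set.mem_Iio.1 ht]
  refine Integrable.of_integral_ne_zero ?_
  rw [← mgf, mgf_norm_sq_isotropicGaussian hlam ht]
  positivity

lemma mem_interior_integrableExpSet_norm_sq (hlam : 0 < lam) {t : ℝ} (ht : t < lam / 2) :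
    t ∈ interior (integrableExpSet (fun x ↦ ‖x‖ ^ 2) (isotropicGaussian E lam)) :=
  interior_maximal (Iio_subset_integrableExpSet_norm_sq hlam) isOpen_Iio ht

lemma iteratedDeriv_mgf_norm_sq_isotropicGaussian (hlam : 0 < lam) (n : ℕ) {t : ℝ}
    (ht : t < lam / 2) :
    iteratedDeriv n (mgf (fun x ↦ ‖x‖ ^ 2) (isotropicGaussian E lam)) t =
      (∏ j ∈ Finset.range n, (finrank ℝ E + 2 * j : ℝ)) / lam ^ n *
        (1 - 2 * t / lam) ^ (-((finrank ℝ E : ℝ) / 2) - n) := by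
  induction n generalizing t with
  | zero => simp [mgf_norm_sq_isotropicGaussian hlam ht]
  | succ n ih =>
    have hbase : 1 - 2 * t / lam ≠ 0 := by
      rw [sub_ne_zero, ne_comm, ne_eq, div_eq_one_iff_eq hlam.ne']
      linarith
    have hderiv : HasDerivAt (fun s ↦ 1 - 2 * s / lam) (-(2 / lam)) t := by
      simpa using (((hasDerivAt_id t).const_mul 2).div_const lam).const_sub 1
    rw [iteratedDeriv_succ,
      Filter.EventuallyEq.deriv_eq ((eventually_lt_nhds ht).mono fun s hs ↦ ih hs),
      ((hderiv.rpow_const (.inl hbase)).const_mul _).deriv, Finset.prod_range_succ, pow_succ,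
      Nat.cast_succ, ← sub_sub]
    field_simp
    ring

lemma integral_norm_pow_two_mul_isotropicGaussian (hlam : 0 < lam) (n : ℕ) :
    ∫ x, ‖x‖ ^ (2 * n) ∂isotropicGaussian E lam =
      (∏ j ∈ Finset.range n, (finrank ℝ E + 2 * j : ℝ)) / lam ^ n := by
  have hmoment := iteratedDeriv_mgf_zero
    (mem_interior_integrableExpSet_norm_sq (E := E) hlam (half_pos hlam)) n
  rw [iteratedDeriv_mgf_norm_sq_isotropicGaussian hlam n (half_pos hlam)] at hmoment
  simpa [pow_mul] using hmoment.symm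

lemma integrable_norm_pow_two_mul_isotropicGaussian (hlam : 0 < lam) (n : ℕ) :
    Integrable (fun x ↦ ‖x‖ ^ (2 * n)) (isotropicGaussian E lam) := by
  simpa only [pow_mul] using integrable_pow_of_mem_interior_integrableExpSet
    (mem_interior_integrableExpSet_norm_sq hlam (half_pos hlam)) n

lemma integral_norm_pow_four_isotropicGaussian (hlam : 0 < lam) :
    ∫ x, ‖x‖ ^ 4 ∂isotropicGaussian E lam = finrank ℝ E * (finrank ℝ E + 2) / lam ^ 2 := by
  simpa [Finset.prod_range_succ] using
    integral_norm_pow_two_mul_isotropicGaussian (E := E) hlam 2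

lemma memLp_norm_pow_four_isotropicGaussian (hlam : 0 < lam) :
    MemLp (fun x ↦ ‖x‖ ^ 4) 2 (isotropicGaussian E lam) := by
  refine (memLp_two_iff_integrable_sq (by fun_prop)).2 ?_
  simpa only [← pow_mul] using integrable_norm_pow_two_mul_isotropicGaussian hlam 4

lemma variance_norm_pow_four_isotropicGaussian (hlam : 0 < lam) :
    Var[fun x ↦ ‖x‖ ^ 4; isotropicGaussian E lam] =
      8 * finrank ℝ E * (finrank ℝ E + 2) * (finrank ℝ E + 3) / lam ^ 4 := by
  have := isProbabilityMeasure_isotropicGaussian (E := E) hlam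
  have hsq : ∫ x, (‖x‖ ^ 4) ^ 2 ∂isotropicGaussian E lam =
      finrank ℝ E * (finrank ℝ E + 2) * (finrank ℝ E + 4) * (finrank ℝ E + 6) / lam ^ 4 := by
    simp only [← pow_mul]
    rw [integral_norm_pow_two_mul_isotropicGaussian hlam 4]
    norm_num [Finset.prod_range_succ]
  rw [variance_eq_sub (memLp_norm_pow_four_isotropicGaussian hlam),
    integral_norm_pow_four_isotropicGaussian hlam]
  simp only [Pi.pow_apply, hsq]
  field_simp
  ring

lemma integral_neg_mul_norm_pow_four_isotropicGaussian (hlam : 0 < lam) :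
    ∫ x, -κ * ‖x‖ ^ 4 ∂isotropicGaussian E lam =
      -(κ * (finrank ℝ E * (finrank ℝ E + 2) / lam ^ 2)) := by
  rw [integral_const_mul, integral_norm_pow_four_isotropicGaussian hlam, neg_mul]

lemma integrable_exp_neg_mul_norm_pow_four_isotropicGaussian (hlam : 0 < lam) (hκ : 0 ≤ κ) :
    Integrable (fun x ↦ exp (-κ * ‖x‖ ^ 4)) (isotropicGaussian E lam) := by
  have := isProbabilityMeasure_isotropicGaussian (E := E) hlam
  refine integrable_exp_of_ae_le (C := 0) (by fun_prop) (ae_of_all _ fun x ↦ ?_)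
  have : 0 ≤ κ * ‖x‖ ^ 4 := by positivity
  linarith

lemma neg_le_log_integral_exp_neg_norm_pow_four (hlam : 0 < lam) (hκ : 0 ≤ κ) :
    -(κ * (finrank ℝ E * (finrank ℝ E + 2) / lam ^ 2)) ≤
      log (∫ x, exp (-κ * ‖x‖ ^ 4) ∂isotropicGaussian E lam) := by
  have := isProbabilityMeasure_isotropicGaussian (E := E) hlam
  rw [← integral_neg_mul_norm_pow_four_isotropicGaussian hlam]
  exact integral_le_log_integral_exp
    ((integrable_norm_pow_two_mul_isotropicGaussian hlam 2).const_mul _)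
    (integrable_exp_neg_mul_norm_pow_four_isotropicGaussian hlam hκ)

lemma log_integral_exp_neg_norm_pow_four_le_of_mean_le_one (hlam : 0 < lam) (hκ : 0 ≤ κ)
    (hmean : κ * (finrank ℝ E * (finrank ℝ E + 2) / lam ^ 2) ≤ 1) :
    log (∫ x, exp (-κ * ‖x‖ ^ 4) ∂isotropicGaussian E lam) ≤
      -(κ * (finrank ℝ E * (finrank ℝ E + 2) / lam ^ 2)) +
        κ ^ 2 * (8 * finrank ℝ E * (finrank ℝ E + 2) * (finrank ℝ E + 3) / lam ^ 4) := by
  have := isProbabilityMeasure_isotropicGaussian (E := E) hlam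
  have hlog := log_integral_exp_le_integral_add_variance (X := fun x : E ↦ -κ * ‖x‖ ^ 4)
    ((memLp_norm_pow_four_isotropicGaussian hlam).const_mul (-κ)) <| ae_of_all _ fun x ↦ by
      rw [integral_neg_mul_norm_pow_four_isotropicGaussian hlam]
      have : 0 ≤ κ * ‖x‖ ^ 4 := by positivity
      linarith
  rwa [integral_neg_mul_norm_pow_four_isotropicGaussian hlam, variance_const_mul,
    variance_norm_pow_four_isotropicGaussian hlam, neg_sq] at hlog

lemma log_integral_exp_neg_norm_pow_four_le_of_linearization (hlam : 0 < lam) (hκ : 0 ≤ κ) {s : ℝ}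
    (hs : 0 ≤ s) :
    log (∫ x, exp (-κ * ‖x‖ ^ 4) ∂isotropicGaussian E lam) ≤
      κ * s ^ 2 - finrank ℝ E / 2 * log (1 + 4 * κ * s / lam) := by
  have hexp := integrable_exp_neg_mul_norm_pow_four_isotropicGaussian (E := E) hlam hκ
  have ht : -(2 * κ * s) < lam / 2 := by linarith [half_pos hlam, show 0 ≤ 2 * κ * s by positivity]
  have hle : ∫ x, exp (-κ * ‖x‖ ^ 4) ∂isotropicGaussian E lam ≤
      exp (κ * s ^ 2) * mgf (fun x ↦ ‖x‖ ^ 2) (isotropicGaussian E lam) (-(2 * κ * s)) := by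
    rw [mgf, ← integral_const_mul]
    refine integral_mono hexp ((Iio_subset_integrableExpSet_norm_sq hlam ht).const_mul _) fun x ↦ ?_
    simp only [← exp_add]
    gcongr
    linarith [show 0 ≤ κ * (‖x‖ ^ 2 - s) ^ 2 by positivity]
  have hbase : 1 - 2 * -(2 * κ * s) / lam = 1 + 4 * κ * s / lam := by ring
  rw [mgf_norm_sq_isotropicGaussian hlam ht, hbase] at hle
  have hpos : 0 < 1 + 4 * κ * s / lam := by positivity
  have := isProbabilityMeasure_isotropicGaussian (E := E) hlam
  refine (log_le_log (integral_exp_pos hexp) hle).trans_eq ?_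
  rw [log_mul (exp_ne_zero _) (by positivity), log_exp, log_rpow hpos]
  ring

variable {a : ℝ}

lemma log_integral_exp_neg_norm_pow_four_le_of_le (ha : 0 ≤ a) (hlam : 0 < lam)
    (hcase : 3 * a * (finrank ℝ E : ℝ) ^ 2 ≤ lam) :
    log (∫ x, exp (-(lam * a) * ‖x‖ ^ 4) ∂isotropicGaussian E lam) ≤
      -(lam * a * (finrank ℝ E * (finrank ℝ E + 2) / lam ^ 2)) +
        96 * a ^ 2 * (finrank ℝ E : ℝ) ^ 3 / lam ^ 2 := by
  have hd_sq : (finrank ℝ E : ℝ) ≤ (finrank ℝ E : ℝ) ^ 2 := by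
    exact_mod_cast Nat.le_self_pow two_ne_zero _
  have hd_cube : (finrank ℝ E : ℝ) ^ 2 ≤ (finrank ℝ E : ℝ) ^ 3 := by
    nlinarith [Nat.cast_nonneg (α := ℝ) (finrank ℝ E)]
  have hmean : lam * a * (finrank ℝ E * (finrank ℝ E + 2) / lam ^ 2) ≤ 1 := by
    rw [← mul_div_assoc, div_le_one (by positivity), pow_two, mul_assoc]
    gcongr
    nlinarith
  refine (log_integral_exp_neg_norm_pow_four_le_of_mean_le_one hlam (by positivity) hmean).trans ?_
  gcongr
  set d : ℝ := (finrank ℝ E : ℝ)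
  have hpoly : d * (d + 2) * (d + 3) ≤ 12 * d ^ 3 := by linarith
  calc (lam * a) ^ 2 * (8 * d * (d + 2) * (d + 3) / lam ^ 4)
      = 8 * a ^ 2 * (d * (d + 2) * (d + 3)) / lam ^ 2 := by field_simp
    _ ≤ 8 * a ^ 2 * (12 * d ^ 3) / lam ^ 2 := by gcongr
    _ = 96 * a ^ 2 * d ^ 3 / lam ^ 2 := by ring

lemma log_integral_exp_neg_norm_pow_four_le_of_ge (ha : 0 ≤ a) (hlam : 0 < lam)
    (hcase : lam ≤ 3 * a * (finrank ℝ E : ℝ) ^ 2) :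
    log (∫ x, exp (-(lam * a) * ‖x‖ ^ 4) ∂isotropicGaussian E lam) ≤
      -(lam * a * (finrank ℝ E * (finrank ℝ E + 2) / lam ^ 2)) +
        10 * a ^ 2 * (finrank ℝ E : ℝ) ^ 3 / lam ^ 2 := by
  refine (log_integral_exp_neg_norm_pow_four_le_of_linearization (s := finrank ℝ E / lam)
    hlam (by positivity) (by positivity)).trans ?_
  set d : ℝ := (finrank ℝ E : ℝ)
  have : 0 ≤ d := Nat.cast_nonneg _
  set t : ℝ := 4 * (lam * a) * (d / lam) / lam with ht
  have ht_nonneg : 0 ≤ t := by positivity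
  calc lam * a * (d / lam) ^ 2 - d / 2 * log (1 + t)
      ≤ lam * a * (d / lam) ^ 2 - d / 2 * (t - t ^ 2 / 2) := by
        gcongr
        exact sub_sq_div_two_le_log_one_add ht_nonneg
    _ = -(lam * a * (d * (d + 2) / lam ^ 2)) +
          (2 * a * d * lam + 4 * a ^ 2 * d ^ 3) / lam ^ 2 := by
        rw [ht]
        field_simp
        ring
    _ ≤ -(lam * a * (d * (d + 2) / lam ^ 2)) +
          (2 * a * d * (3 * a * d ^ 2) + 4 * a ^ 2 * d ^ 3) / lam ^ 2 := by gcongr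
    _ = -(lam * a * (d * (d + 2) / lam ^ 2)) + 10 * a ^ 2 * d ^ 3 / lam ^ 2 := by ring

lemma log_integral_exp_neg_norm_pow_four_le (ha : 0 ≤ a) (hlam : 0 < lam) :
    log (∫ x, exp (-(lam * a) * ‖x‖ ^ 4) ∂isotropicGaussian E lam) ≤
      -(lam * a * (finrank ℝ E * (finrank ℝ E + 2) / lam ^ 2)) +
        96 * a ^ 2 * (finrank ℝ E : ℝ) ^ 3 / lam ^ 2 := by
  rcases le_total (3 * a * (finrank ℝ E : ℝ) ^ 2) lam with hcase | hcase
  · exact log_integral_exp_neg_norm_pow_four_le_of_le ha hlam hcase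
  · refine (log_integral_exp_neg_norm_pow_four_le_of_ge ha hlam hcase).trans ?_
    gcongr
    norm_num

theorem quartic_example_general (ha : 0 ≤ a) (hlam : 0 < lam) :
    |log ((lam / (2 * π)) ^ ((finrank ℝ E : ℝ) / 2) *
          ∫ x : E, exp (-(lam * (‖x‖ ^ 2 / 2 + a * ‖x‖ ^ 4)))) +
        a * (finrank ℝ E : ℝ) ^ 2 / lam + 2 * a * finrank ℝ E / lam| ≤
      96 * a ^ 2 * (finrank ℝ E : ℝ) ^ 3 / lam ^ 2 := by
  have hexponent (x : E) : -(lam * (‖x‖ ^ 2 / 2 + a * ‖x‖ ^ 4)) =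
      -(lam / 2) * ‖x‖ ^ 2 + -(lam * a) * ‖x‖ ^ 4 := by ring
  have hmean : lam * a * (finrank ℝ E * (finrank ℝ E + 2) / lam ^ 2) =
      a * (finrank ℝ E : ℝ) ^ 2 / lam + 2 * a * finrank ℝ E / lam := by
    field_simp
  have hlower := neg_le_log_integral_exp_neg_norm_pow_four (E := E) hlam (mul_nonneg hlam.le ha)
  have hupper := log_integral_exp_neg_norm_pow_four_le (E := E) ha hlam
  have herror : 0 ≤ 96 * a ^ 2 * (finrank ℝ E : ℝ) ^ 3 / lam ^ 2 := by positivity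
  simp only [hexponent, ← integral_exp_isotropicGaussian hlam]
  rw [hmean] at hlower hupper
  rw [abs_le]
  constructor <;> linarith

end IsotropicGaussian

/-- **Quartic-exponent example.** There are absolute constants `c ∈ (0,1)` and `C > 0` such
that for all integers `d ≥ 4` and reals `λ ≥ 3` with `log λ ≤ d` and `d³ ≤ cλ²`,
`|log((λ/(2π))^{d/2} ∫ exp(−λ(‖x‖²/2 + ‖x‖⁴/24)) dx) + d²/(24λ) + d/(12λ)| ≤ C d³/λ²`. -/
theorem quartic_example :
    ∃ c C : ℝ, 0 < c ∧ c < 1 ∧ 0 < C ∧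
      ∀ (d : ℕ), 4 ≤ d → ∀ lam : ℝ, 3 ≤ lam → Real.log lam ≤ d →
        (d : ℝ) ^ 3 ≤ c * lam ^ 2 →
        |Real.log ((lam / (2 * π)) ^ ((d : ℝ) / 2) *
              ∫ x : EuclideanSpace ℝ (Fin d),
                Real.exp (-(lam * (‖x‖ ^ 2 / 2 + ‖x‖ ^ 4 / 24)))) +
            (d : ℝ) ^ 2 / (24 * lam) + (d : ℝ) / (12 * lam)| ≤
          C * (d : ℝ) ^ 3 / lam ^ 2 := by
  refine ⟨1 / 2, 1 / 6, by norm_num, by norm_num, by norm_num, fun d _ lam hlam _ _ ↦ ?_⟩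
  convert quartic_example_general (E := EuclideanSpace ℝ (Fin d)) (a := 1 / 24) (lam := lam)
    (by norm_num) (by linarith) using 1 <;> simp only [finrank_euclideanSpace_fin] <;> ring_nf
end
end
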